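/- For all n ≥ 2 and all even k ≥ 2, the number of isomorphism classes of k-minimal trees on n vertices is at most t(k²), where t(m) denotes the number of isomorphism classes of trees on m vertices. -/

import Mathlib

/-- `J` is a distance-`k` independent set in `G`: any two distinct vertices of `J`
are at graph distance at least `k + 1`. -/
def DkIndep {V : Type*} (G : SimpleGraph V) (k : ℕ) (J : Set V) : Prop :=
  ∀ ⦃u⦄, u ∈ J → ∀ ⦃v⦄, v ∈ J → u ≠ v → k + 1 ≤ G.dist u v

/-- `J` is a maximal distance-`k` independent set (`k`-MDIS) of `G`. -/
def MaxDkIndep {V : Type*} (G : SimpleGraph V) (k : ℕ) (J : Set V) : Prop :=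
  DkIndep G k J ∧ ∀ J', DkIndep G k J' → J ⊆ J' → J' = J

/-- `mdi G k` is the number of maximal distance-`k` independent sets of `G`. -/
noncomputable def mdi {V : Type*} (G : SimpleGraph V) (k : ℕ) : ℕ :=
  {J : Set V | MaxDkIndep G k J}.ncard

/-- `f_k(n)` from the paper. -/
def fk (k n : ℕ) : ℕ :=
  if n ≤ k + 1 then n else n - (n - k % 2) / (k / 2 + 1) + 1

/-- closed ball `N_k[x]`. -/
def ball {V : Type*} (G : SimpleGraph V) (k : ℕ) (x : V) : Set V :=
  {v | G.dist x v ≤ k}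

/-- a leaf is a vertex of degree 1. -/
def IsLeaf {V : Type*} (G : SimpleGraph V) (v : V) : Prop :=
  (G.neighborSet v).ncard = 1

/-- eccentricity of a vertex. -/
noncomputable def ecc {V : Type*} [Fintype V] (G : SimpleGraph V) (v : V) : ℕ :=
  Finset.univ.sup (G.dist v)

/-- diameter of a finite graph. -/
noncomputable def gdiam {V : Type*} [Fintype V] (G : SimpleGraph V) : ℕ :=
  Finset.univ.sup (ecc G)

/-- a central vertex is one of minimum eccentricity. -/
def IsCentral {V : Type*} [Fintype V] (G : SimpleGraph V) (v : V) : Prop :=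
  ∀ u, ecc G v ≤ ecc G u

/-- a `k`-twin: some other vertex has the same closed `k`-ball. -/
def KTwin {V : Type*} (G : SimpleGraph V) (k : ℕ) (u : V) : Prop :=
  ∃ v, v ≠ u ∧ ball G k u = ball G k v

/-- a diametral leaf: a leaf whose eccentricity equals the diameter. -/
def IsDiametralLeaf {V : Type*} [Fintype V] (G : SimpleGraph V) (u : V) : Prop :=
  IsLeaf G u ∧ ecc G u = gdiam G

/-- a `k`-special pair. -/
def KSpecial {V : Type*} [Fintype V] (G : SimpleGraph V) (k : ℕ) (x y : V) : Prop :=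
  IsDiametralLeaf G x ∧ IsDiametralLeaf G y ∧ KTwin G k x ∧ KTwin G k y ∧
    ball G k x ≠ ball G k y

/-- `mdi*_k(G, ℓ)`. -/
noncomputable def mdiStar {V : Type*} (G : SimpleGraph V) (k : ℕ) (ℓ : V) : ℕ :=
  {J : Set V | MaxDkIndep G k J ∧ ℓ ∈ J ∧ ∃ w ∉ J, ball G k w ∩ J = {ℓ}}.ncard

/-- The spider tree `S_{p,m}`: a center (`none`) together with `p` legs of `m` vertices. -/
def spider (p m : ℕ) : SimpleGraph (Option (Fin p × Fin m)) :=
  SimpleGraph.fromRel fun a b =>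
    match a, b with
    | none, some (_, j) => (j : ℕ) = 0
    | some (i, j), some (i', j') => i = i' ∧ (j : ℕ) + 1 = (j' : ℕ)
    | _, _ => False

/-- `S'_{p,m}`: the spider `S_{p,m}` with one leaf at distance `m` from the center removed. -/
def spider' (p m : ℕ) (hp : 0 < p) (hm : 0 < m) :=
  (spider p m).induce
    {v | v ≠ some (⟨0, hp⟩, ⟨m - 1, Nat.sub_lt hm Nat.one_pos⟩)}

/-- The double spider `B_{p₁,p₂,s}`: two adjacent centers (`Sum.inl false`, `Sum.inl true`),
with `p₁` legs of `s` vertices on the first and `p₂` legs of `s` vertices on the second. -/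
def btree (p₁ p₂ s : ℕ) : SimpleGraph (Bool ⊕ ((Fin p₁ ⊕ Fin p₂) × Fin s)) :=
  SimpleGraph.fromRel fun a b =>
    match a, b with
    | Sum.inl x, Sum.inl y => x ≠ y
    | Sum.inl false, Sum.inr (Sum.inl _, j) => (j : ℕ) = 0
    | Sum.inl true, Sum.inr (Sum.inr _, j) => (j : ℕ) = 0
    | Sum.inr (c, j), Sum.inr (c', j') => c = c' ∧ (j : ℕ) + 1 = (j' : ℕ)
    | _, _ => False

/-- `G` contains a subgraph isomorphic to `H`. -/
def ContainsSub {V W : Type*} (G : SimpleGraph V) (H : SimpleGraph W) : Prop :=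
  ∃ f : W → V, Function.Injective f ∧ ∀ a b, H.Adj a b → G.Adj (f a) (f b)

/-- A pendant path on `s` vertices `P 0, …, P (s-1)` attached to `w`:
`P 0` is a leaf, consecutive vertices are adjacent, interior vertices have degree 2,
and `P (s-1)` is adjacent to `w`. -/
def IsPendantPath {V : Type*} (T : SimpleGraph V) (s : ℕ) (P : ℕ → V) (w : V) : Prop :=
  Set.InjOn P (Set.Iio s) ∧ (∀ i < s, P i ≠ w) ∧ IsLeaf T (P 0) ∧
    (∀ i, i + 1 < s → T.Adj (P i) (P (i + 1))) ∧
    (∀ i, 0 < i → i < s → (T.neighborSet (P i)).ncard = 2) ∧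
    T.Adj (P (s - 1)) w

/-- Isomorphism of simple graphs on `Fin n` as a setoid. -/
def graphSetoid (n : ℕ) : Setoid (SimpleGraph (Fin n)) where
  r G H := Nonempty (G ≃g H)
  iseqv := ⟨fun _ => ⟨SimpleGraph.Iso.refl⟩, fun ⟨e⟩ => ⟨e.symm⟩, fun ⟨e⟩ ⟨f⟩ => ⟨e.trans f⟩⟩

/-- The number of isomorphism classes of graphs in a set of graphs on `Fin n`. -/
noncomputable def numIsoClasses {n : ℕ} (S : Set (SimpleGraph (Fin n))) : ℕ :=
  ((fun G => Quotient.mk (graphSetoid n) G) '' S).ncard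

/-!
Write `k = 2m` and `n = q (m + 1) + ρ` with `ρ ≤ m`. A suitable spider has at most `n - q + 1`
maximal distance-`k` independent sets.

Conversely, fix a root `r` of a tree and greedily collect the vertices farthest from `r` into a
distance-`k` independent set `R`; the balls of radius `m` around `R` are disjoint, so `|R| ≤ q`.
Every vertex `x ∉ R` is the deepest vertex outside `R` of some maximal set, and `R` is itself
maximal, so there are at least `n - |R| + 1` of them. In a minimal tree equality holds throughout,
and each `x ∉ R` determines its maximal set. Applied at every root, this rigidity bounds the
diameter by `2m + 2`, so all vertices are within `m + 1` of some centre `w`. The packing rooted at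
`w` meets each branch at `w` at most once, and counting vertices shows that all but `ρ + 1` of the
branches it meets are pendant paths with `m + 1` vertices.

For `m ≥ 2`, delete `q - 1 - ρ` such paths and hang leaves on `w` until there are `k²` vertices.
There is room for enough leaves to make `w` the unique vertex of maximal degree, so the padded tree
determines the original one. For `k = 2` the rigidity leaves only stars with `q - 1` or `q` paths of
two vertices attached to their centre, and there are two trees on four vertices.
-/

namespace MinimalTrees

open SimpleGraph

/-! ### Distances in trees -/

section Distance

variable {V : Type*} {G : SimpleGraph V}

theorem exists_dist_eq (hG : G.Connected) (a b : V) {j : ℕ} (hj : j ≤ G.dist a b) :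
    ∃ t, G.dist a t = j ∧ j + G.dist t b = G.dist a b := by
  obtain ⟨p, hp⟩ := hG.exists_walk_length_eq_dist a b
  have h_take : G.dist a (p.getVert j) ≤ j := (dist_le (p.take j)).trans (by simp)
  have h_drop : G.dist (p.getVert j) b ≤ G.dist a b - j :=
    (dist_le (p.drop j)).trans (by simp [hp])
  have := hG.dist_triangle (u := a) (v := p.getVert j) (w := b)
  exact ⟨p.getVert j, by omega, by omega⟩

theorem dist_add_dist_of_mem_support (hG : G.Connected) {a b t : V} {p : G.Walk a b}
    (hp : p.length = G.dist a b) (ht : t ∈ p.support) :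
    G.dist a t + G.dist t b = G.dist a b := by
  classical
  have h_length := congrArg Walk.length (p.take_spec ht)
  rw [Walk.length_append] at h_length
  have h_take := dist_le (p.takeUntil t ht)
  have h_drop := dist_le (p.dropUntil t ht)
  have := hG.dist_triangle (u := a) (v := t) (w := b)
  omega

theorem dist_eq_dist_add_dist_of_color_ne {α : Type*} (hG : G.Connected) {w : V} {color : V → α}
    (h_color : ∀ ⦃x y⦄, G.Adj x y → x ≠ w → y ≠ w → color x = color y) {x y : V}
    (hxy : color x ≠ color y) : G.dist x y = G.dist w x + G.dist w y := by
  have h_mem : ∀ {x y : V} (p : G.Walk x y), color x ≠ color y → w ∈ p.support := by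
    intro x y p
    induction p with
    | nil => exact fun h => absurd rfl h
    | @cons x z y h_adj p ih =>
      intro h_ne
      rcases eq_or_ne x w with rfl | hx
      · exact Walk.start_mem_support _
      rcases eq_or_ne z w with rfl | hz
      · exact List.mem_cons_of_mem _ p.start_mem_support
      · exact List.mem_cons_of_mem _ (ih (h_color h_adj hx hz ▸ h_ne))
  obtain ⟨p, hp⟩ := hG.exists_walk_length_eq_dist x y
  rw [← dist_add_dist_of_mem_support hG hp (h_mem p hxy), dist_comm (v := w)]

theorem dist_add_dist_eq_or (hG : G.IsTree) {a b t : V}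
    (h : G.dist a t + G.dist t b = G.dist a b) (z : V) :
    G.dist a t + G.dist t z = G.dist a z ∨ G.dist b t + G.dist t z = G.dist b z := by
  classical
  obtain ⟨p, hp⟩ := hG.connected.exists_walk_length_eq_dist a z
  obtain ⟨q, hq⟩ := hG.connected.exists_walk_length_eq_dist b z
  obtain ⟨r₁, hr₁⟩ := hG.connected.exists_walk_length_eq_dist a t
  obtain ⟨r₂, hr₂⟩ := hG.connected.exists_walk_length_eq_dist t b
  have h_path : (r₁.append r₂).IsPath :=
    Walk.isPath_of_length_eq_dist _ (by rw [Walk.length_append]; omega)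
  have h_eq : r₁.append r₂ = (p.append q.reverse).bypass :=
    congrArg Subtype.val
      ((hG.isAcyclic.subsingleton_path a b).elim ⟨_, h_path⟩ ⟨_, Walk.bypass_isPath _⟩)
  have ht : t ∈ (p.append q.reverse).support :=
    Walk.support_bypass_subset_support _ (h_eq ▸ by simp)
  rw [Walk.mem_support_append_iff, Walk.support_reverse, List.mem_reverse] at ht
  exact ht.imp (dist_add_dist_of_mem_support hG.connected hp)
    (dist_add_dist_of_mem_support hG.connected hq)

theorem dist_eq_add_one_or_of_adj (hG : G.IsTree) (r : V) {x y : V} (h : G.Adj x y) :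
    G.dist r x = G.dist r y + 1 ∨ G.dist r y = G.dist r x + 1 := by
  have := hG.dist_ne_of_adj r h
  have := h.diff_dist_adj (u := r)
  omega

theorem even_dist_add_dist_add_dist (hG : G.IsTree) (a b c : V) :
    Even (G.dist a b + G.dist a c + G.dist b c) := by
  have h_walk : ∀ {b c : V} (p : G.Walk b c), Even (G.dist a b + G.dist a c + p.length) := by
    intro b c p
    induction p with
    | nil => simp
    | cons h_adj p ih =>
      rw [Walk.length_cons]
      have := dist_eq_add_one_or_of_adj hG a h_adj
      grind
  obtain ⟨p, hp⟩ := hG.connected.exists_walk_length_eq_dist b c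
  exact hp ▸ h_walk p

theorem exists_median (hG : G.IsTree) (a b c : V) :
    ∃ t, G.dist a t + G.dist t b = G.dist a b ∧ G.dist a t + G.dist t c = G.dist a c ∧
      G.dist b t + G.dist t c = G.dist b c := by
  obtain ⟨s, hs⟩ := even_dist_add_dist_add_dist hG a b c
  have h_ac := hG.connected.dist_triangle (u := a) (v := b) (w := c)
  have h_bc := hG.connected.dist_triangle (u := b) (v := a) (w := c)
  rw [dist_comm (u := b) (v := a)] at h_bc
  -- `s - dist b c` is the Gromov product of `b` and `c` at `a`.
  obtain ⟨t, h_at, h_tb⟩ :=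
    exists_dist_eq hG.connected a b (j := s - G.dist b c) (by omega)
  have h_between : G.dist a t + G.dist t b = G.dist a b := by omega
  have h_comm := G.dist_comm (u := b) (v := t)
  refine ⟨t, h_between, ?_⟩
  rcases dist_add_dist_eq_or hG h_between c with h | h <;> omega

theorem four_point (hG : G.IsTree) (a b c e : V) :
    G.dist a b + G.dist c e ≤ G.dist a c + G.dist b e ∨
      G.dist a b + G.dist c e ≤ G.dist a e + G.dist b c := by
  obtain ⟨t, h_ab, h_ac, h_bc⟩ := exists_median hG a b c
  have h_ce := hG.connected.dist_triangle (u := c) (v := t) (w := e)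
  rw [dist_comm (u := c) (v := t)] at h_ce
  have h_comm := G.dist_comm (u := b) (v := t)
  rcases dist_add_dist_eq_or hG h_ab e with h | h <;> omega

/-- Ordering a tree by decreasing distance from `r` is a perfect elimination ordering of each of
its powers. -/
theorem dist_le_of_dist_le_of_dist_root_le (hG : G.IsTree) {v u₁ u₂ r : V} {k : ℕ}
    (h₁ : G.dist v u₁ ≤ k) (h₂ : G.dist v u₂ ≤ k) (hr₁ : G.dist r u₁ ≤ G.dist r v)
    (hr₂ : G.dist r u₂ ≤ G.dist r v) : G.dist u₁ u₂ ≤ k := by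
  have := G.dist_comm (u := u₁) (v := v)
  have := G.dist_comm (u := u₂) (v := v)
  have := G.dist_comm (u := u₁) (v := r)
  have := G.dist_comm (u := u₂) (v := r)
  have := G.dist_comm (u := v) (v := r)
  rcases four_point hG u₁ u₂ v r with h | h <;> omega

end Distance

section Step

variable {V : Type*} {G : SimpleGraph V}

open Classical in
/-- The neighbour of `a` on the path from `a` to `b`; by convention it is `a` when `a = b`.
So `stepTo G w x` names the branch at `w` containing `x`, and `stepTo G x w` is the parent of `x`
when the tree is rooted at `w`. -/
noncomputable def stepTo (G : SimpleGraph V) (a b : V) : V :=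
  if h : ∃ c, G.Adj a c ∧ G.dist c b + 1 = G.dist a b then h.choose else a

@[simp]
theorem stepTo_self (G : SimpleGraph V) (a : V) : stepTo G a a = a := by
  simp [stepTo]

theorem stepTo_spec (hG : G.Connected) {a b : V} (hab : a ≠ b) :
    G.Adj a (stepTo G a b) ∧ G.dist (stepTo G a b) b + 1 = G.dist a b := by
  have h_exists : ∃ c, G.Adj a c ∧ G.dist c b + 1 = G.dist a b := by
    obtain ⟨c, hac, hcb⟩ := exists_dist_eq hG a b (hG.pos_dist_of_ne hab)
    exact ⟨c, dist_eq_one_iff_adj.1 hac, by omega⟩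
  rw [stepTo, dif_pos h_exists]
  exact h_exists.choose_spec

theorem eq_stepTo (hG : G.IsTree) {a b c : V} (h_adj : G.Adj a c)
    (h_dist : G.dist c b + 1 = G.dist a b) : c = stepTo G a b := by
  have hab : a ≠ b := by rintro rfl; simp at h_dist
  obtain ⟨h_adj', h_dist'⟩ := stepTo_spec hG.connected hab
  rw [dist_comm, dist_comm (u := a)] at h_dist h_dist'
  have h_le : G.dist c (stepTo G a b) ≤ 1 :=
    dist_le_of_dist_le_of_dist_root_le hG (r := b) (dist_eq_one_iff_adj.2 h_adj).le
      (dist_eq_one_iff_adj.2 h_adj').le (by omega) (by omega)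
  by_contra h_ne
  have h_pos := hG.connected.pos_dist_of_ne h_ne
  exact hG.dist_ne_of_adj b (dist_eq_one_iff_adj.1 (h_le.antisymm h_pos)) (by omega)

theorem stepTo_of_adj (hG : G.IsTree) {a b : V} (h : G.Adj a b) : stepTo G a b = b :=
  (eq_stepTo hG h (by simp [dist_eq_one_iff_adj.2 h])).symm

theorem stepTo_stepTo (hG : G.IsTree) (a b : V) : stepTo G a (stepTo G a b) = stepTo G a b := by
  rcases eq_or_ne a b with rfl | hab
  · simp
  · exact stepTo_of_adj hG (stepTo_spec hG.connected hab).1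

theorem stepTo_eq_iff (hG : G.Connected) {w x : V} : stepTo G w x = w ↔ x = w := by
  refine ⟨fun h => ?_, fun h => h ▸ stepTo_self G x⟩
  by_contra h_ne
  exact (stepTo_spec hG (Ne.symm h_ne)).1.ne h.symm

theorem stepTo_eq_of_adj (hG : G.IsTree) {w x y : V} (h : G.Adj x y) (hx : x ≠ w) (hy : y ≠ w) :
    stepTo G w x = stepTo G w y := by
  wlog h_dist : G.dist w y = G.dist w x + 1 generalizing x y
  · exact (this h.symm hy hx ((dist_eq_add_one_or_of_adj hG w h).resolve_right h_dist)).symm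
  obtain ⟨h_adj, h_step⟩ := stepTo_spec hG.connected hx.symm
  have h₁ := hG.connected.dist_triangle (u := stepTo G w x) (v := x) (w := y)
  have h₂ := hG.connected.dist_triangle (u := w) (v := stepTo G w x) (w := y)
  rw [dist_eq_one_iff_adj.2 h] at h₁
  rw [dist_eq_one_iff_adj.2 h_adj] at h₂
  exact eq_stepTo hG h_adj (by omega)

theorem dist_eq_of_stepTo_ne (hG : G.IsTree) {w x y : V} (h : stepTo G w x ≠ stepTo G w y) :
    G.dist x y = G.dist w x + G.dist w y :=
  dist_eq_dist_add_dist_of_color_ne hG.connected (fun _ _ => stepTo_eq_of_adj hG) h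

theorem dist_add_two_le_of_stepTo_eq (hG : G.Connected) {w x y : V} (hx : x ≠ w)
    (h : stepTo G w x = stepTo G w y) : G.dist x y + 2 ≤ G.dist w x + G.dist w y := by
  have hy : y ≠ w := fun hy => hx ((stepTo_eq_iff hG).1 (h.trans ((stepTo_eq_iff hG).2 hy)))
  have h_x := (stepTo_spec hG hx.symm).2
  have h_y := (stepTo_spec hG hy.symm).2
  have h_triangle := hG.dist_triangle (u := x) (v := stepTo G w x) (w := y)
  rw [dist_comm (u := x) (v := stepTo G w x)] at h_triangle
  rw [← h] at h_y
  omega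

theorem stepTo_eq_of_dist_add_dist (hG : G.IsTree) {w t x : V} (ht : t ≠ w)
    (h : G.dist w t + G.dist t x = G.dist w x) : stepTo G w t = stepTo G w x := by
  by_contra h_ne
  have := dist_eq_of_stepTo_ne hG h_ne
  have := hG.connected.pos_dist_of_ne ht.symm
  omega

theorem stepTo_stepTo_root (hG : G.IsTree) {w x : V} (hx : x ≠ w) (h_root : stepTo G x w ≠ w) :
    stepTo G w (stepTo G x w) = stepTo G w x :=
  (stepTo_eq_of_adj hG (stepTo_spec hG.connected hx).1 hx h_root).symm

end Step
/-! ### Greedy packings and the number of maximal independent sets -/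

section Packing

variable {V : Type*} {G : SimpleGraph V} {k : ℕ}

theorem dkIndep_mono {S T : Set V} (hT : DkIndep G k T) (h : S ⊆ T) : DkIndep G k S :=
  fun _ hu _ hv => hT (h hu) (h hv)

theorem dkIndep_insert {S : Set V} {x : V} :
    DkIndep G k (insert x S) ↔ DkIndep G k S ∧ ∀ v ∈ S, x ≠ v → k + 1 ≤ G.dist x v := by
  refine ⟨fun h => ⟨dkIndep_mono h (Set.subset_insert x S), fun v hv => h (.inl rfl) (.inr hv)⟩, ?_⟩
  rintro ⟨hS, hx⟩ u (rfl | hu) v (rfl | hv) huv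
  · exact absurd rfl huv
  · exact hx v hv huv
  · exact G.dist_comm (u := u) ▸ hx u hu huv.symm
  · exact hS hu hv huv

theorem dkIndep_pair {x y : V} (h : k + 1 ≤ G.dist x y) : DkIndep G k {x, y} :=
  dkIndep_insert.2 ⟨fun u hu v hv huv => absurd (hu.trans hv.symm) huv, by rintro _ rfl _; exact h⟩

theorem exists_maxDkIndep_superset [Finite V] {S : Set V} (hS : DkIndep G k S) :
    ∃ J, MaxDkIndep G k J ∧ S ⊆ J := by
  obtain ⟨J, hSJ, hJ⟩ :=
    (Set.toFinite {J : Set V | DkIndep G k J}).exists_le_maximal (a := S) hS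
  exact ⟨J, ⟨hJ.1, fun _ hJ' hle => (hJ.2 hJ' hle).antisymm hle⟩, hSJ⟩

/-- A distance-`k` independent set in which every vertex is dominated by a member at least as far
from `r`. Such sets arise by greedily collecting vertices farthest from `r`. -/
structure IsGreedyPacking (G : SimpleGraph V) (k : ℕ) (r : V) (R : Finset V) : Prop where
  indep : DkIndep G k (R : Set V)
  exists_dominating : ∀ y, ∃ v ∈ R, G.dist v y ≤ k ∧ G.dist r y ≤ G.dist r v

theorem exists_isGreedyPacking [Finite V] (G : SimpleGraph V) (k : ℕ) (r : V) :
    ∃ R, IsGreedyPacking G k r R := by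
  classical
  have := Fintype.ofFinite V
  have h_within : ∀ A : Finset V, ∃ R ⊆ A, DkIndep G k (R : Set V) ∧
      ∀ y ∈ A, ∃ v ∈ R, G.dist v y ≤ k ∧ G.dist r y ≤ G.dist r v := by
    intro A
    induction A using Finset.strongInduction with
    | H A ih =>
      rcases A.eq_empty_or_nonempty with rfl | hA
      · exact ⟨∅, by simp [DkIndep]⟩
      obtain ⟨v, hv, h_max⟩ := A.exists_max_image (G.dist r) hA
      obtain ⟨R, h_sub, h_indep, h_dom⟩ := ih (A.filter fun y => k < G.dist v y)
        (Finset.filter_ssubset.2 ⟨v, hv, by simp⟩)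
      refine ⟨insert v R, Finset.insert_subset hv (h_sub.trans (Finset.filter_subset _ _)), ?_, ?_⟩
      · rw [Finset.coe_insert, dkIndep_insert]
        exact ⟨h_indep, fun x hx _ => (Finset.mem_filter.1 (h_sub hx)).2⟩
      · intro y hy
        by_cases h : G.dist v y ≤ k
        · exact ⟨v, Finset.mem_insert_self v R, h, h_max y hy⟩
        · obtain ⟨u, hu, h_u⟩ := h_dom y (Finset.mem_filter.2 ⟨hy, not_le.1 h⟩)
          exact ⟨u, Finset.mem_insert_of_mem hu, h_u⟩
  obtain ⟨R, -, h_indep, h_dom⟩ := h_within Finset.univ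
  exact ⟨R, h_indep, fun y => h_dom y (Finset.mem_univ y)⟩

theorem IsGreedyPacking.maxDkIndep {r : V} {R : Finset V} (hR : IsGreedyPacking G k r R) :
    MaxDkIndep G k (R : Set V) := by
  refine ⟨hR.indep, fun J hJ h_sub => Set.Subset.antisymm (fun y hy => ?_) h_sub⟩
  obtain ⟨v, hv, h_dist, -⟩ := hR.exists_dominating y
  by_contra hyR
  have := hJ (h_sub hv) hy (fun h => hyR (h ▸ hv))
  omega

theorem card_mul_le_card_of_dkIndep [Fintype V] (hG : G.Connected) {m : ℕ}
    (hm : m + 1 ≤ Fintype.card V) {R : Finset V} (hR : DkIndep G (2 * m) (R : Set V)) :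
    R.card * (m + 1) ≤ Fintype.card V := by
  classical
  rcases Nat.lt_or_ge 1 R.card with h_card | h_card
  swap
  · exact (Nat.mul_le_mul_right _ h_card).trans (by omega)
  have h_point : ∀ x : R × Fin (m + 1), ∃ t, G.dist x.1 t = x.2 := by
    rintro ⟨v, j⟩
    obtain ⟨u, hu, h_ne⟩ := Finset.exists_mem_ne h_card v.1
    have := hR v.2 hu h_ne.symm
    obtain ⟨t, ht, -⟩ := exists_dist_eq hG v.1 u (j := j) (by omega)
    exact ⟨t, ht⟩
  choose f hf using h_point
  have h_inj : Function.Injective f := by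
    rintro ⟨v, j⟩ ⟨v', j'⟩ h_eq
    have h_v : G.dist v (f (v, j)) = j := hf (v, j)
    have h_v' : G.dist v' (f (v, j)) = j' := h_eq ▸ hf (v', j')
    have h_vertex : v = v' := by
      by_contra h_ne
      have := hR v.2 v'.2 (Subtype.coe_injective.ne h_ne)
      have := hG.dist_triangle (u := v.1) (v := f (v, j)) (w := v'.1)
      rw [dist_comm (u := f (v, j))] at this
      omega
    subst h_vertex
    rw [h_v] at h_v'
    exact congrArg _ (Fin.ext h_v')
  simpa using Fintype.card_le_of_injective f h_inj

/-- `x` is the unique vertex of `J` outside `R` at the largest distance from `r`. -/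
def IsDeepestOutside (G : SimpleGraph V) (r : V) (R : Finset V) (J : Set V) (x : V) : Prop :=
  x ∈ J ∧ x ∉ R ∧ ∀ y ∈ J, y ∉ R → y ≠ x → G.dist r y < G.dist r x

theorem IsDeepestOutside.unique {r x x' : V} {R : Finset V} {J : Set V}
    (hx : IsDeepestOutside G r R J x) (hx' : IsDeepestOutside G r R J x') : x = x' := by
  by_contra h_ne
  exact (hx.2.2 x' hx'.1 hx'.2.1 (Ne.symm h_ne)).asymm (hx'.2.2 x hx.1 hx.2.1 h_ne)

theorem IsGreedyPacking.exists_isDeepestOutside [Finite V] (hG : G.IsTree) {r : V} {R : Finset V}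
    (hR : IsGreedyPacking G k r R) {x : V} (hx : x ∉ R) :
    ∃ J, MaxDkIndep G k J ∧ IsDeepestOutside G r R J x := by
  have h_indep : DkIndep G k (insert x {v | v ∈ R ∧ k + 1 ≤ G.dist x v}) :=
    dkIndep_insert.2 ⟨dkIndep_mono hR.indep fun _ hv => hv.1, fun _ hv _ => hv.2⟩
  obtain ⟨J, hJ, h_sub⟩ := exists_maxDkIndep_superset h_indep
  have hxJ : x ∈ J := h_sub (Set.mem_insert _ _)
  refine ⟨J, hJ, hxJ, hx, fun y hyJ hyR hyx => ?_⟩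
  by_contra! h_deep
  obtain ⟨v, hv, h_vy, h_depth⟩ := hR.exists_dominating y
  have h_vx : G.dist v x ≤ k := by
    by_contra! h_far
    have hvJ : v ∈ J := h_sub (.inr ⟨hv, G.dist_comm (u := v) ▸ h_far⟩)
    have := hJ.1 hvJ hyJ (fun h => hyR (h ▸ hv))
    omega
  have h_close := dist_le_of_dist_le_of_dist_root_le hG h_vy h_vx h_depth (by omega)
  have := hJ.1 hyJ hxJ hyx
  omega

theorem ncard_insert_image_compl [Fintype V] {r : V} {R : Finset V} {J : V → Set V}
    (hJ : ∀ x ∉ R, IsDeepestOutside G r R (J x) x) :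
    (insert (R : Set V) (J '' (R : Set V)ᶜ)).ncard + R.card = Fintype.card V + 1 := by
  have h_inj : Set.InjOn J (R : Set V)ᶜ := fun x hx x' hx' h =>
    (hJ x hx).unique (h ▸ hJ x' hx')
  have h_notMem : (R : Set V) ∉ J '' (R : Set V)ᶜ := by
    rintro ⟨x, hx, h_eq⟩
    exact hx (h_eq ▸ (hJ x hx).1)
  rw [Set.ncard_insert_of_notMem h_notMem (Set.toFinite _), h_inj.ncard_image]
  have := Set.ncard_add_ncard_compl (R : Set V)
  rw [Set.ncard_coe_finset, Nat.card_eq_fintype_card] at this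
  omega

theorem IsGreedyPacking.exists_family [Finite V] (hG : G.IsTree) {r : V} {R : Finset V}
    (hR : IsGreedyPacking G k r R) :
    ∃ J : V → Set V, (∀ x ∉ R, IsDeepestOutside G r R (J x) x) ∧
      insert (R : Set V) (J '' (R : Set V)ᶜ) ⊆ {I | MaxDkIndep G k I} := by
  have h_exists : ∀ x, ∃ J, x ∉ R → MaxDkIndep G k J ∧ IsDeepestOutside G r R J x := fun x => by
    by_cases hx : x ∈ R
    · exact ⟨∅, fun h => absurd hx h⟩
    · exact (hR.exists_isDeepestOutside hG hx).imp fun _ h _ => h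
  choose J hJ using h_exists
  refine ⟨J, fun x hx => (hJ x hx).2, Set.insert_subset hR.maxDkIndep ?_⟩
  rintro _ ⟨x, hx, rfl⟩
  exact (hJ x hx).1

theorem IsGreedyPacking.card_lt_mdi_add_card [Fintype V] (hG : G.IsTree) {r : V} {R : Finset V}
    (hR : IsGreedyPacking G k r R) : Fintype.card V < mdi G k + R.card := by
  obtain ⟨J, hJ, h_sub⟩ := hR.exists_family hG
  rw [← Nat.add_one_le_iff, ← ncard_insert_image_compl hJ]
  exact Nat.add_le_add_right (Set.ncard_le_ncard h_sub (Set.toFinite _)) _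

theorem IsGreedyPacking.maxDkIndep_eq_of_mem [Fintype V] (hG : G.IsTree) {r : V} {R : Finset V}
    (hR : IsGreedyPacking G k r R) (h_le : mdi G k + R.card ≤ Fintype.card V + 1)
    {x : V} (hx : x ∉ R) (h_max : ∀ x' ∉ R, G.dist r x' ≤ G.dist r x) {I I' : Set V}
    (hI : MaxDkIndep G k I) (hI' : MaxDkIndep G k I') (hxI : x ∈ I) (hxI' : x ∈ I') : I = I' := by
  obtain ⟨J, hJ, h_sub⟩ := hR.exists_family hG
  have h_card := ncard_insert_image_compl hJ
  rw [mdi] at h_le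
  have h_all := Set.eq_of_subset_of_ncard_le h_sub (by omega) (Set.toFinite _)
  have h_eq : ∀ I, MaxDkIndep G k I → x ∈ I → I = J x := by
    intro I hI hxI
    have hI_mem : I ∈ insert (R : Set V) (J '' (R : Set V)ᶜ) := h_all ▸ hI
    obtain rfl | ⟨x', hx', rfl⟩ := hI_mem
    · exact absurd hxI hx
    · by_cases h : x = x'
      · rw [h]
      · exact absurd ((hJ x' hx').2.2 x hxI hx h) (h_max x' hx').not_gt
  rw [h_eq I hI hxI, h_eq I' hI' hxI']

theorem IsGreedyPacking.lt_dist_of_lt_dist [Fintype V] (hG : G.IsTree) {r : V} {R : Finset V}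
    (hR : IsGreedyPacking G k r R) (h_le : mdi G k + R.card ≤ Fintype.card V + 1)
    {x : V} (hx : x ∉ R) (h_max : ∀ x' ∉ R, G.dist r x' ≤ G.dist r x) {y z : V}
    (hy : k < G.dist x y) (hz : k < G.dist x z) (hyz : y ≠ z) : k < G.dist y z := by
  obtain ⟨I, hI, hxy⟩ := exists_maxDkIndep_superset (dkIndep_pair hy)
  obtain ⟨I', hI', hxz⟩ := exists_maxDkIndep_superset (dkIndep_pair hz)
  obtain rfl := hR.maxDkIndep_eq_of_mem hG h_le hx h_max hI hI' (hxy (.inl rfl)) (hxz (.inl rfl))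
  exact hI.1 (hxy (.inr rfl)) (hxz (.inr rfl)) hyz

/-- The conclusions drawn from equality in the lower bound on `mdi G (2 * m)`: a greedy packing of
`q` vertices such that the vertices far from a deepest vertex outside it are far from each other. -/
structure IsRigidPacking (G : SimpleGraph V) (m q : ℕ) (r : V) (R : Finset V) : Prop
    extends IsGreedyPacking G (2 * m) r R where
  card_eq : R.card = q
  lt_dist : ∀ x ∉ R, (∀ x' ∉ R, G.dist r x' ≤ G.dist r x) → ∀ y z,
    2 * m < G.dist x y → 2 * m < G.dist x z → y ≠ z → 2 * m < G.dist y z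

theorem exists_isRigidPacking [Fintype V] (hG : G.IsTree) {m : ℕ} (hm : m + 1 ≤ Fintype.card V)
    (h_mdi : mdi G (2 * m) + Fintype.card V / (m + 1) ≤ Fintype.card V + 1) (r : V) :
    ∃ R, IsRigidPacking G m (Fintype.card V / (m + 1)) r R := by
  obtain ⟨R, hR⟩ := exists_isGreedyPacking G (2 * m) r
  have h_upper : R.card ≤ Fintype.card V / (m + 1) :=
    (Nat.le_div_iff_mul_le m.succ_pos).2 (card_mul_le_card_of_dkIndep hG.connected hm hR.indep)
  have h_lower := hR.card_lt_mdi_add_card hG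
  exact ⟨R, hR, by omega, fun x hx h_max _ _ => hR.lt_dist_of_lt_dist hG (by omega) hx h_max⟩

theorem dist_le_of_isRigidPacking [Finite V] (hG : G.Connected) {m q : ℕ} (hm : 1 ≤ m) {r : V}
    {R : Finset V} (hR : IsRigidPacking G m q r R) (y : V) : G.dist r y ≤ 2 * m + 2 := by
  classical
  have := Fintype.ofFinite V
  by_contra! hy
  obtain ⟨p, h_rp, h_py⟩ := exists_dist_eq hG r y (j := G.dist r y - 1) (by omega)
  have h_deep : ∃ x ∉ R, 2 * m + 2 ≤ G.dist r x := by
    by_cases hyR : y ∈ R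
    · refine ⟨p, fun hpR => ?_, by omega⟩
      have := hR.indep hpR hyR (by rintro rfl; omega)
      omega
    · exact ⟨y, hyR, by omega⟩
  obtain ⟨x₀, hx₀, h_deep⟩ := h_deep
  obtain ⟨x, hx, h_max⟩ := Finset.exists_max_image Rᶜ (G.dist r) ⟨x₀, Finset.mem_compl.2 hx₀⟩
  simp only [Finset.mem_compl] at hx h_max
  have := h_max x₀ hx₀
  obtain ⟨t, h_rt, h_tx⟩ := exists_dist_eq hG r x (j := 1) (by omega)
  have := G.dist_comm (u := x) (v := r)
  have := G.dist_comm (u := x) (v := t)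
  have := hR.lt_dist x hx h_max r t (by omega) (by omega) (by rintro rfl; simp at h_rt)
  omega

theorem exists_forall_dist_le [Finite V] (hG : G.IsTree) {s : ℕ}
    (h : ∀ a b, G.dist a b ≤ 2 * s) : ∃ w, ∀ y, G.dist w y ≤ s := by
  have := hG.connected.nonempty
  obtain ⟨⟨a, b⟩, h_max⟩ := Finite.exists_max fun p : V × V => G.dist p.1 p.2
  obtain ⟨w, h_aw, h_wb⟩ :=
    exists_dist_eq hG.connected a b (j := G.dist a b / 2) (by omega)
  refine ⟨w, fun y => ?_⟩
  have := G.dist_comm (u := b) (v := w)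
  have := h a b
  have : G.dist a y ≤ G.dist a b := h_max (a, y)
  have : G.dist b y ≤ G.dist a b := h_max (b, y)
  rcases dist_add_dist_eq_or hG (a := a) (b := b) (t := w) (by omega) y with h | h <;> omega

end Packing

/-! ### Branches at the centre -/

section Branch

variable {V : Type*} {G : SimpleGraph V} {m : ℕ} {w : V} {R : Finset V}

/-- A distance-`2m` independent set with at least two vertices in a graph all of whose vertices are
within distance `m + 1` of the centre `w`. -/
structure IsRadialPacking (G : SimpleGraph V) (m : ℕ) (w : V) (R : Finset V) : Prop where
  pos : 1 ≤ m
  dist_le : ∀ y, G.dist w y ≤ m + 1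
  indep : DkIndep G (2 * m) (R : Set V)
  one_lt_card : 1 < R.card

namespace IsRadialPacking

theorem ne_and_le_dist (hR : IsRadialPacking G m w R) (hG : G.Connected) {v : V} (hv : v ∈ R) :
    v ≠ w ∧ m ≤ G.dist w v := by
  obtain ⟨u, hu, h_ne⟩ := Finset.exists_mem_ne hR.one_lt_card v
  have := hR.indep hv hu h_ne.symm
  have h_triangle := hG.dist_triangle (u := v) (v := w) (w := u)
  rw [dist_comm (u := v) (v := w)] at h_triangle
  have := hR.dist_le u
  have := hR.pos
  refine ⟨?_, by omega⟩
  rintro rfl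
  omega

theorem eq_of_dist_le (hR : IsRadialPacking G m w R) (hG : G.Connected) {u v : V} (hu : u ∈ R)
    (hv : v ∈ R) (h_u : G.dist w u ≤ m) (h_v : G.dist w v ≤ m) : u = v := by
  by_contra h_ne
  have := hR.indep hu hv h_ne
  have h_triangle := hG.dist_triangle (u := u) (v := w) (w := v)
  rw [dist_comm (u := u) (v := w)] at h_triangle
  omega

theorem injOn_stepTo (hR : IsRadialPacking G m w R) (hG : G.Connected) :
    Set.InjOn (stepTo G w) (R : Set V) := by
  intro u hu v hv h_step
  by_contra h_ne
  have := hR.indep hu hv h_ne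
  have := dist_add_two_le_of_stepTo_eq hG (hR.ne_and_le_dist hG hu).1 h_step
  have := hR.dist_le u
  have := hR.dist_le v
  omega

theorem card_filter_dist_le (hR : IsRadialPacking G m w R) (hG : G.Connected) {A : Finset V}
    (hA : A ⊆ R) : (A.filter fun v => G.dist w v ≤ m).card ≤ 1 := by
  refine Finset.card_le_one.2 fun u hu v hv => ?_
  rw [Finset.mem_filter] at hu hv
  exact hR.eq_of_dist_le hG (hA hu.1) (hA hv.1) hu.2 hv.2

end IsRadialPacking

variable [Fintype V]

open Classical in
/-- The vertices other than `w` lying in the component of `x` after deleting `w`. -/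
noncomputable def branch (G : SimpleGraph V) (w x : V) : Finset V :=
  Finset.univ.filter fun y => y ≠ w ∧ stepTo G w y = stepTo G w x

theorem mem_branch {x y : V} : y ∈ branch G w x ↔ y ≠ w ∧ stepTo G w y = stepTo G w x := by
  simp [branch]

theorem exists_mem_branch_dist_eq (hG : G.IsTree) {x : V} {j : ℕ} (hj : 1 ≤ j)
    (hjx : j ≤ G.dist w x) : ∃ t ∈ branch G w x, G.dist w t = j := by
  obtain ⟨t, ht, h_tx⟩ := exists_dist_eq hG.connected w x hjx
  have h_ne : t ≠ w := by rintro rfl; simp at ht; omega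
  exact ⟨t, mem_branch.2 ⟨h_ne, stepTo_eq_of_dist_add_dist hG h_ne (by omega)⟩, ht⟩

theorem dist_le_card_branch (hG : G.IsTree) (w x : V) : G.dist w x ≤ (branch G w x).card := by
  classical
  have h_sub : Finset.Icc 1 (G.dist w x) ⊆ (branch G w x).image (G.dist w) := by
    intro j hj
    obtain ⟨hj_pos, hj_le⟩ := Finset.mem_Icc.1 hj
    exact Finset.mem_image.2 (exists_mem_branch_dist_eq hG hj_pos hj_le)
  simpa using (Finset.card_le_card h_sub).trans Finset.card_image_le

theorem sum_card_branch_lt {A : Finset V} (hA : Set.InjOn (stepTo G w) (A : Set V)) :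
    ∑ v ∈ A, (branch G w v).card < Fintype.card V := by
  classical
  have h_disjoint : ∀ u ∈ A, ∀ v ∈ A, u ≠ v → Disjoint (branch G w u) (branch G w v) := by
    refine fun u hu v hv huv => Finset.disjoint_left.2 fun z hz hz' => huv (hA hu hv ?_)
    exact (mem_branch.1 hz).2.symm.trans (mem_branch.1 hz').2
  rw [← Finset.card_biUnion h_disjoint]
  refine Finset.card_lt_univ_of_notMem (x := w) fun hw => ?_
  obtain ⟨v, -, hv⟩ := Finset.mem_biUnion.1 hw
  exact (mem_branch.1 hv).1 rfl

/-- In a tree, this says that the branch at `w` through `l` is a path with `s` vertices ending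
in `l`. -/
def IsLegEnd (G : SimpleGraph V) (w : V) (s : ℕ) (l : V) : Prop :=
  G.dist w l = s ∧ (branch G w l).card ≤ s

theorem card_le_card_filter_ne_add_one {α β : Type*} [DecidableEq β] {f : α → β} {A : Finset α}
    (hf : Set.InjOn f (A : Set α)) (b : β) : A.card ≤ (A.filter fun a => f a ≠ b).card + 1 := by
  have h_fiber : (A.filter fun a => ¬ f a ≠ b).card ≤ 1 := by
    refine Finset.card_le_one.2 fun a ha a' ha' => ?_
    rw [Finset.mem_filter, not_not] at ha ha'
    exact hf ha.1 ha'.1 (ha.2.trans ha'.2.symm)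
  have h_split := A.card_filter_add_card_filter_not fun a => f a ≠ b
  omega

namespace IsRadialPacking

open Classical in
theorem card_le_card_filter_isLegEnd (hR : IsRadialPacking G m w R) (hG : G.IsTree) {ρ : ℕ}
    (h_card : Fintype.card V = R.card * (m + 1) + ρ) :
    R.card ≤ (R.filter (IsLegEnd G w (m + 1))).card + (ρ + 1) := by
  rw [Nat.mul_succ] at h_card
  have h_point : ∀ v ∈ R, m + 1 + (if ¬ IsLegEnd G w (m + 1) v then 1 else 0) ≤
      (branch G w v).card + 2 * if G.dist w v ≤ m then 1 else 0 := by
    intro v hv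
    have := (hR.ne_and_le_dist hG.connected hv).2
    have := hR.dist_le v
    have := dist_le_card_branch hG w v
    grind [IsLegEnd]
  have h_sum := Finset.sum_le_sum h_point
  simp only [Finset.sum_add_distrib, ← Finset.mul_sum, Finset.sum_boole, Finset.sum_const,
    smul_eq_mul, Nat.cast_id] at h_sum
  have h_shallow := hR.card_filter_dist_le hG.connected subset_rfl
  have h_branches := sum_card_branch_lt (hR.injOn_stepTo hG.connected)
  have h_split := R.card_filter_add_card_filter_not (IsLegEnd G w (m + 1))
  omega

theorem card_branch_le (hR : IsRadialPacking G m w R) (hG : G.IsTree) {ρ : ℕ}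
    (h_card : Fintype.card V = R.card * (m + 1) + ρ) (u : V) :
    (branch G w u).card ≤ m + 1 + ρ := by
  classical
  let A := R.filter fun v => stepTo G w v ≠ stepTo G w u
  have hA : A ⊆ R := Finset.filter_subset _ _
  have h_cardA : R.card ≤ A.card + 1 :=
    card_le_card_filter_ne_add_one (hR.injOn_stepTo hG.connected) (stepTo G w u)
  have huA : u ∉ A := by simp [A]
  have h_inj : Set.InjOn (stepTo G w) (insert u A : Finset V) := by
    rw [Finset.coe_insert, Set.injOn_insert huA]
    refine ⟨(hR.injOn_stepTo hG.connected).mono hA, ?_⟩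
    rintro ⟨v, hv, h_eq⟩
    exact (Finset.mem_filter.1 hv).2 h_eq
  have h_branches := sum_card_branch_lt h_inj
  rw [Finset.sum_insert huA] at h_branches
  have h_point : ∀ v ∈ A, m + 1 ≤ (branch G w v).card + if G.dist w v ≤ m then 1 else 0 := by
    intro v hv
    have := (hR.ne_and_le_dist hG.connected (hA hv)).2
    have := dist_le_card_branch hG w v
    grind
  have h_sum := Finset.sum_le_sum h_point
  simp only [Finset.sum_add_distrib, Finset.sum_boole, Finset.sum_const, smul_eq_mul,
    Nat.cast_id] at h_sum
  have h_shallow := hR.card_filter_dist_le hG.connected hA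
  have := Nat.mul_le_mul_right (m + 1) h_cardA
  rw [Nat.add_one_mul, Nat.mul_succ, Nat.mul_succ] at this
  rw [Nat.mul_succ] at h_card
  omega

end IsRadialPacking

end Branch

/-! ### Rooted trees given by a parent function -/

section Parent

variable {V V' : Type*} {G : SimpleGraph V} {G' : SimpleGraph V'} {w : V} {w' : V'}
  {par : V → V} {par' : V' → V'} {depth : V → ℕ} {depth' : V' → ℕ}

/-- The edges of `G` join each vertex `x ≠ w` to its parent `par x`, which is one level closer to
the root `w`; the value of `par w` is irrelevant. -/
structure IsParentFn (G : SimpleGraph V) (w : V) (par : V → V) (depth : V → ℕ) : Prop where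
  adj_iff : ∀ x y, G.Adj x y ↔ (x ≠ w ∧ par x = y) ∨ (y ≠ w ∧ par y = x)
  depth_root : depth w = 0
  depth_par : ∀ x ≠ w, depth (par x) + 1 = depth x

namespace IsParentFn

theorem adj_par (h : IsParentFn G w par depth) {x : V} (hx : x ≠ w) : G.Adj x (par x) :=
  (h.adj_iff x (par x)).2 (.inl ⟨hx, rfl⟩)

theorem exists_walk_length_eq_depth (h : IsParentFn G w par depth) (x : V) :
    ∃ p : G.Walk w x, p.length = depth x := by
  induction hd : depth x generalizing x with
  | zero =>
    obtain rfl : x = w := by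
      by_contra hx
      have := h.depth_par x hx
      omega
    exact ⟨Walk.nil, rfl⟩
  | succ d ih =>
    have hx : x ≠ w := by
      rintro rfl
      rw [h.depth_root] at hd
      omega
    obtain ⟨p, hp⟩ := ih (par x) (by have := h.depth_par x hx; omega)
    exact ⟨p.concat (h.adj_par hx).symm, by rw [Walk.length_concat, hp]⟩

theorem connected (h : IsParentFn G w par depth) : G.Connected :=
  G.connected_iff_exists_forall_reachable.2 ⟨w, fun x =>
    (h.exists_walk_length_eq_depth x).choose.reachable⟩

theorem depth_le_add_length (h : IsParentFn G w par depth) {x y : V} (p : G.Walk x y) :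
    depth y ≤ depth x + p.length := by
  induction p with
  | nil => simp
  | @cons x z y h_adj p ih =>
    rw [Walk.length_cons]
    obtain ⟨hx, rfl⟩ | ⟨hz, rfl⟩ := (h.adj_iff x z).1 h_adj
    · have := h.depth_par x hx
      omega
    · have := h.depth_par z hz
      omega

theorem dist_root (h : IsParentFn G w par depth) (x : V) : G.dist w x = depth x := by
  obtain ⟨p, hp⟩ := h.exists_walk_length_eq_depth x
  obtain ⟨q, hq⟩ := h.connected.exists_walk_length_eq_dist w x
  have h_le := h.depth_le_add_length q
  rw [h.depth_root, zero_add, hq] at h_le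
  exact (hp ▸ dist_le p).antisymm h_le

theorem isTree [Finite V] (h : IsParentFn G w par depth) : G.IsTree := by
  rw [isTree_iff_connected_and_card]
  refine ⟨h.connected, le_antisymm ?_ h.connected.card_vert_le_card_edgeSet_add_one⟩
  have h_edges : G.edgeSet ⊆ (fun x => s(x, par x)) '' {w}ᶜ := by
    refine Sym2.ind fun x y h_adj => ?_
    obtain ⟨hx, rfl⟩ | ⟨hy, rfl⟩ := (h.adj_iff x y).1 h_adj
    · exact ⟨x, hx, rfl⟩
    · exact ⟨y, hy, Sym2.eq_swap⟩
  have h_card := (Set.ncard_le_ncard h_edges (Set.toFinite _)).trans Set.ncard_image_le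
  have h_compl := Set.ncard_add_ncard_compl ({w} : Set V)
  rw [Set.ncard_singleton] at h_compl
  rw [Nat.card_coe_set_eq]
  omega

theorem induce (h : IsParentFn G w par depth) {S : Set V} (hw : w ∈ S)
    (hS : ∀ x ∈ S, par x ∈ S) :
    IsParentFn (G.induce S) ⟨w, hw⟩ (fun x => ⟨par x, hS x x.2⟩) (fun x => depth x) where
  adj_iff x y := by
    rw [comap_adj, Function.Embedding.subtype_apply, Function.Embedding.subtype_apply, h.adj_iff]
    simp only [ne_eq, Subtype.ext_iff]
  depth_root := h.depth_root
  depth_par x hx := h.depth_par x (fun h_eq => hx (Subtype.ext h_eq))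

/-- An equivalence commuting with the parent functions is a graph isomorphism. -/
def iso (h : IsParentFn G w par depth) (h' : IsParentFn G' w' par' depth') (e : V ≃ V')
    (h_root : e w = w') (h_par : ∀ x ≠ w, e (par x) = par' (e x)) : G ≃g G' where
  toEquiv := e
  map_rel_iff' {x y} := by
    have h_parent : ∀ x y, (e x ≠ w' ∧ par' (e x) = e y) ↔ (x ≠ w ∧ par x = y) := by
      intro x y
      rw [← h_root, e.injective.ne_iff]
      exact and_congr_right fun hx => by rw [← h_par x hx, e.injective.eq_iff]
    rw [h'.adj_iff, h.adj_iff, h_parent, h_parent]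

end IsParentFn

theorem isParentFn_stepTo (hG : G.IsTree) (w : V) :
    IsParentFn G w (fun x => stepTo G x w) (G.dist w) where
  adj_iff x y := by
    have h_parent : ∀ {x y}, G.Adj x y → G.dist w x = G.dist w y + 1 →
        x ≠ w ∧ stepTo G x w = y := by
      intro x y h_adj h_dist
      refine ⟨by rintro rfl; simp at h_dist, (eq_stepTo hG h_adj ?_).symm⟩
      rw [dist_comm, ← h_dist, dist_comm]
    constructor
    · intro h_adj
      exact (dist_eq_add_one_or_of_adj hG w h_adj).imp (h_parent h_adj) (h_parent h_adj.symm)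
    · rintro (⟨hx, rfl⟩ | ⟨hy, rfl⟩)
      · exact (stepTo_spec hG.connected hx).1
      · exact (stepTo_spec hG.connected hy).1.symm
  depth_root := dist_self
  depth_par x hx := by
    have := (stepTo_spec hG.connected hx).2
    rwa [dist_comm, dist_comm (u := x)] at this

end Parent

section AttachPaths

variable {W W' ι ι' : Type*} {X : SimpleGraph W} {X' : SimpleGraph W'} {w : W} {w' : W'} {s : ℕ}

/-- The graph obtained from `X` by attaching at `w`, for each `i : ι`, a path on the `s` new
vertices `(i, 0), …, (i, s - 1)`, of which `(i, 0)` is adjacent to `w`. -/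
def attachPaths (X : SimpleGraph W) (w : W) (ι : Type*) (s : ℕ) : SimpleGraph (W ⊕ ι × Fin s) where
  Adj
    | .inl x, .inl y => X.Adj x y
    | .inl x, .inr p => x = w ∧ (p.2 : ℕ) = 0
    | .inr p, .inl x => x = w ∧ (p.2 : ℕ) = 0
    | .inr p, .inr p' => p.1 = p'.1 ∧ ((p.2 : ℕ) + 1 = p'.2 ∨ (p'.2 : ℕ) + 1 = p.2)
  symm := ⟨by
    rintro (x | p) (y | p') h
    · exact X.adj_symm h
    · exact h
    · exact h
    · exact ⟨h.1.symm, h.2.symm⟩⟩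
  loopless := ⟨by
    rintro (x | p) h
    · exact X.irrefl h
    · exact absurd h.2 (by omega)⟩

@[simp]
theorem attachPaths_adj_inl_inl {x y : W} :
    (attachPaths X w ι s).Adj (.inl x) (.inl y) ↔ X.Adj x y := Iff.rfl

@[simp]
theorem attachPaths_adj_inl_inr {x : W} {p : ι × Fin s} :
    (attachPaths X w ι s).Adj (.inl x) (.inr p) ↔ x = w ∧ (p.2 : ℕ) = 0 := Iff.rfl

@[simp]
theorem attachPaths_adj_inr_inl {x : W} {p : ι × Fin s} :
    (attachPaths X w ι s).Adj (.inr p) (.inl x) ↔ x = w ∧ (p.2 : ℕ) = 0 := Iff.rfl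

@[simp]
theorem attachPaths_adj_inr_inr {p p' : ι × Fin s} :
    (attachPaths X w ι s).Adj (.inr p) (.inr p') ↔
      p.1 = p'.1 ∧ ((p.2 : ℕ) + 1 = p'.2 ∨ (p'.2 : ℕ) + 1 = p.2) := Iff.rfl

theorem nonempty_attachPaths_iso (s : ℕ) (e : X ≃g X') (he : e w = w') (f : ι ≃ ι') :
    ∃ e' : attachPaths X w ι s ≃g attachPaths X' w' ι' s, ∀ x, e' (.inl x) = .inl (e x) := by
  subst he
  refine ⟨⟨Equiv.sumCongr e.toEquiv (Equiv.prodCongr f (Equiv.refl _)), ?_⟩, fun _ => rfl⟩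
  rintro (x | p) (y | p') <;> simp [e.map_adj_iff]

/-- The parent function of `attachPaths X w ι s`, given one of `X` rooted at `w`. -/
def attachPar (w : W) (par : W → W) : W ⊕ ι × Fin s → W ⊕ ι × Fin s
  | .inl x => .inl (par x)
  | .inr (_, ⟨0, _⟩) => .inl w
  | .inr (i, ⟨j + 1, hj⟩) => .inr (i, ⟨j, by omega⟩)

theorem isParentFn_attachPaths {par : W → W} {depth : W → ℕ} (h : IsParentFn X w par depth) :
    IsParentFn (attachPaths X w ι s) (.inl w) (attachPar w par)
      (Sum.elim depth fun p => p.2 + 1) where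
  adj_iff := by
    rintro (x | ⟨i, _ | j, hj⟩) (y | ⟨i', _ | j', hj'⟩) <;>
      simp only [attachPar, attachPaths_adj_inl_inl, attachPaths_adj_inl_inr,
        attachPaths_adj_inr_inl, attachPaths_adj_inr_inr, h.adj_iff] <;> grind
  depth_root := h.depth_root
  depth_par := by
    rintro (x | ⟨i, _ | j, hj⟩) hx
    · exact h.depth_par x (by rintro rfl; exact hx rfl)
    · simp [attachPar, h.depth_root]
    · rfl

theorem isTree_attachPaths [Finite W] [Finite ι] (hX : X.IsTree) :
    (attachPaths X w ι s).IsTree :=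
  (isParentFn_attachPaths (isParentFn_stepTo hX w)).isTree

end AttachPaths

section LegRemoval

variable {V : Type*} [Fintype V] {G : SimpleGraph V} {w : V} {s : ℕ} {C : Finset V}

/-- The set of vertices outside all the branches at `w` through members of `C`. -/
def core (G : SimpleGraph V) (w : V) (C : Finset V) : Set V :=
  {x | ∀ l ∈ C, x ∉ branch G w l}

theorem root_mem_core (G : SimpleGraph V) (w : V) (C : Finset V) : w ∈ core G w C :=
  fun _ _ hw => (mem_branch.1 hw).1 rfl

theorem stepTo_mem_core (hG : G.IsTree) {x : V} (hx : x ∈ core G w C) :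
    stepTo G x w ∈ core G w C := by
  rcases eq_or_ne x w with rfl | hxw
  · rwa [stepTo_self]
  intro l hl h_mem
  obtain ⟨h_ne, h_step⟩ := mem_branch.1 h_mem
  exact hx l hl (mem_branch.2 ⟨hxw, (stepTo_stepTo_root hG hxw h_ne).symm.trans h_step⟩)

theorem IsLegEnd.bijOn_dist (hG : G.IsTree) {l : V} (hl : IsLegEnd G w s l) :
    Set.BijOn (G.dist w) (branch G w l) (Set.Icc 1 s) := by
  classical
  have h_sub : Finset.Icc 1 s ⊆ (branch G w l).image (G.dist w) := by
    intro j hj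
    rw [Finset.mem_Icc] at hj
    exact Finset.mem_image.2 (exists_mem_branch_dist_eq hG hj.1 (hl.1 ▸ hj.2))
  have h_card : (Finset.Icc 1 s).card = s := by simp
  have h_image_le : ((branch G w l).image (G.dist w)).card ≤ _ := Finset.card_image_le
  have h_image := Finset.eq_of_subset_of_card_le h_sub (by have := hl.2; omega)
  rw [← Finset.coe_Icc, h_image, Finset.coe_image]
  refine Set.InjOn.bijOn_image (Finset.injOn_of_card_image_eq ?_)
  have := hl.2
  rw [← h_image, h_card] at h_image_le ⊢
  omega

theorem exists_legVertex (hG : G.IsTree) (hC : ∀ l ∈ C, IsLegEnd G w s l) :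
    ∃ f : C × Fin s → V, ∀ p, f p ∈ branch G w p.1 ∧ G.dist w (f p) = p.2 + 1 := by
  have h_exists : ∀ p : C × Fin s, ∃ t, t ∈ branch G w p.1 ∧ G.dist w t = p.2 + 1 := by
    rintro ⟨⟨l, hl⟩, j⟩
    exact ((hC l hl).bijOn_dist hG).surjOn ⟨by simp, j.2⟩
  exact Classical.axiom_of_choice h_exists

theorem bijective_sumElim_legVertex (hG : G.IsTree) (hC : ∀ l ∈ C, IsLegEnd G w s l)
    (h_inj : Set.InjOn (stepTo G w) (C : Set V)) {f : C × Fin s → V}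
    (hf : ∀ p, f p ∈ branch G w p.1 ∧ G.dist w (f p) = p.2 + 1) :
    Function.Bijective (Sum.elim (Subtype.val : core G w C → V) f) := by
  refine ⟨Subtype.val_injective.sumElim ?_ ?_, fun x => ?_⟩
  · rintro ⟨l, j⟩ ⟨l', j'⟩ h_eq
    obtain ⟨h_mem, h_dist⟩ := hf (l, j)
    obtain ⟨h_mem', h_dist'⟩ := hf (l', j')
    rw [h_eq] at h_mem h_dist
    have h_step := (mem_branch.1 h_mem).2.symm.trans (mem_branch.1 h_mem').2
    rw [h_dist'] at h_dist
    exact Prod.ext (Subtype.ext (h_inj l.2 l'.2 h_step)) (Fin.ext (by simpa using h_dist.symm))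
  · intro x p h_eq
    exact x.2 p.1 p.1.2 (h_eq ▸ (hf p).1)
  · by_cases hx : x ∈ core G w C
    · exact ⟨.inl ⟨x, hx⟩, rfl⟩
    obtain ⟨l, hl, hxl⟩ : ∃ l ∈ C, x ∈ branch G w l := by simpa [core] using hx
    have h_bij := (hC l hl).bijOn_dist hG
    obtain ⟨h_pos, h_le⟩ := h_bij.mapsTo hxl
    obtain ⟨h_mem, h_dist⟩ := hf (⟨l, hl⟩, ⟨G.dist w x - 1, by omega⟩)
    exact ⟨.inr _, h_bij.injOn h_mem hxl (h_dist.trans (Nat.sub_add_cancel h_pos))⟩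

theorem nonempty_iso_attachPaths_core (hG : G.IsTree) (hC : ∀ l ∈ C, IsLegEnd G w s l)
    (h_inj : Set.InjOn (stepTo G w) (C : Set V)) :
    Nonempty (G ≃g attachPaths (G.induce (core G w C)) ⟨w, root_mem_core G w C⟩ C s) := by
  obtain ⟨f, hf⟩ := exists_legVertex hG hC
  have h_parent := isParentFn_stepTo hG w
  have h_core := h_parent.induce (root_mem_core G w C) fun x hx => stepTo_mem_core hG hx
  refine ⟨((isParentFn_attachPaths h_core).iso h_parent
    (Equiv.ofBijective _ (bijective_sumElim_legVertex hG hC h_inj hf)) rfl ?_).symm⟩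
  rintro (x | ⟨l, _ | j, hj⟩) _
  · rfl
  · have := h_parent.depth_par _ (mem_branch.1 (hf (l, ⟨0, hj⟩)).1).1
    rw [(hf _).2, Nat.add_right_cancel_iff] at this
    exact hG.connected.dist_eq_zero_iff.1 this
  · obtain ⟨h_mem, h_dist⟩ := hf (l, ⟨j + 1, hj⟩)
    obtain ⟨h_ne, h_step⟩ := mem_branch.1 h_mem
    have h_dist_par := h_parent.depth_par _ h_ne
    rw [h_dist, Nat.add_right_cancel_iff] at h_dist_par
    have h_par_ne : stepTo G (f (l, ⟨j + 1, hj⟩)) w ≠ w := by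
      intro h_eq
      simp [h_eq] at h_dist_par
    obtain ⟨h_mem', h_dist'⟩ := hf (l, ⟨j, by omega⟩)
    refine ((hC l l.2).bijOn_dist hG).injOn h_mem' ?_ (h_dist'.trans h_dist_par.symm)
    exact mem_branch.2 ⟨h_par_ne, (stepTo_stepTo_root hG h_ne h_par_ne).trans h_step⟩

end LegRemoval

/-! ### Cancelling leaves at a vertex of maximum degree -/

section Leaves

variable {W W' ι : Type*} {X : SimpleGraph W} {X' : SimpleGraph W'} {w : W} {w' : W'} {N : ℕ}

theorem ncard_neighborSet_iso (e : X ≃g X') (x : W) :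
    (X'.neighborSet (e x)).ncard = (X.neighborSet x).ncard :=
  (Nat.card_congr (e.mapNeighborSet x)).symm

/-- `w` has degree at least two and larger than that of any other vertex, once its own degree is
increased by `N`. Then `w` is recognizable in the graph with `N` leaves attached to it. -/
structure DominatesDegrees (X : SimpleGraph W) (w : W) (N : ℕ) : Prop where
  ncard_lt : ∀ u ≠ w, (X.neighborSet u).ncard < (X.neighborSet w).ncard + N
  two_le : 2 ≤ (X.neighborSet w).ncard + N

theorem ncard_neighborSet_attachPaths_root [Finite W] (X : SimpleGraph W) (w : W) (N : ℕ) :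
    ((attachPaths X w (Fin N) 1).neighborSet (.inl w)).ncard = (X.neighborSet w).ncard + N := by
  have h_nbhd : (attachPaths X w (Fin N) 1).neighborSet (.inl w) =
      Sum.inl '' X.neighborSet w ∪ Set.range Sum.inr := by
    ext (z | z) <;> simp
  rw [h_nbhd, Set.ncard_union_eq Set.disjoint_image_inl_range_inr,
    Set.ncard_image_of_injective _ Sum.inl_injective, Set.ncard_range_of_injective
    Sum.inr_injective]
  simp

theorem DominatesDegrees.ncard_neighborSet_lt [Finite W] (h : DominatesDegrees X w N)
    {y : W ⊕ Fin N × Fin 1} (hy : y ≠ .inl w) :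
    ((attachPaths X w (Fin N) 1).neighborSet y).ncard <
      ((attachPaths X w (Fin N) 1).neighborSet (.inl w)).ncard := by
  rw [ncard_neighborSet_attachPaths_root]
  rcases y with u | p
  · have hu : u ≠ w := by rintro rfl; exact hy rfl
    have h_nbhd : (attachPaths X w (Fin N) 1).neighborSet (.inl u) =
        Sum.inl '' X.neighborSet u := by
      ext (z | z) <;> simp [hu]
    rw [h_nbhd, Set.ncard_image_of_injective _ Sum.inl_injective]
    exact h.ncard_lt u hu
  · have h_nbhd : (attachPaths X w (Fin N) 1).neighborSet (.inr p) = {.inl w} := by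
      ext (z | z) <;> simp
    rw [h_nbhd, Set.ncard_singleton]
    exact h.two_le

theorem DominatesDegrees.iso_root [Finite W] [Finite W'] (h : DominatesDegrees X w N)
    (h' : DominatesDegrees X' w' N)
    (φ : attachPaths X w (Fin N) 1 ≃g attachPaths X' w' (Fin N) 1) : φ (.inl w) = .inl w' := by
  by_contra h_ne
  have h_lt' := h'.ncard_neighborSet_lt h_ne
  have h_lt := h.ncard_neighborSet_lt (y := φ.symm (.inl w')) fun h_eq => h_ne (by simp [← h_eq])
  rw [ncard_neighborSet_iso] at h_lt h_lt'
  exact h_lt.asymm h_lt'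

/-- The graph obtained from `X` by attaching the new leaf `none` to `w`. -/
def addLeaf (X : SimpleGraph W) (w : W) : SimpleGraph (Option W) where
  Adj
    | some x, some y => X.Adj x y
    | some x, none => x = w
    | none, some x => x = w
    | none, none => False
  symm := ⟨by
    rintro (_ | x) (_ | y) h
    · exact h
    · exact h
    · exact h
    · exact X.adj_symm h⟩
  loopless := ⟨by
    rintro (_ | x) h
    · exact h
    · exact X.irrefl h⟩

theorem addLeaf_adj_some_some {x y : W} : (addLeaf X w).Adj (some x) (some y) ↔ X.Adj x y :=
  Iff.rfl

theorem addLeaf_adj_none {z : Option W} : (addLeaf X w).Adj none z ↔ z = some w := by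
  cases z <;> simp [addLeaf]

theorem exists_iso_of_addLeaf_iso (φ : addLeaf X w ≃g addLeaf X' w')
    (hφ : φ (some w) = some w') : ∃ e : X ≃g X', e w = w' := by
  set e : W ≃ W' := Equiv.removeNone φ.toEquiv
  have he_of_none {x : W} (hx : φ (some x) = none) : some (e x) = φ none :=
    Equiv.removeNone_none _ hx
  have he_of_some {x : W} (hx : φ (some x) ≠ none) : some (e x) = φ (some x) :=
    Equiv.removeNone_some _ (Option.ne_none_iff_exists'.1 hx)
  have h_adj_of_none {x y : W} (hx : φ (some x) = none) : X'.Adj (e x) (e y) ↔ X.Adj x y := by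
    rcases eq_or_ne y x with rfl | hyx
    · simp
    have hy : φ (some y) ≠ none := fun hy =>
      hyx (Option.some_injective _ (φ.injective (hy.trans hx.symm)))
    rw [← addLeaf_adj_some_some (w := w'), he_of_none hx, he_of_some hy, φ.map_adj_iff,
      ← addLeaf_adj_some_some (w := w), ← φ.map_adj_iff (v := some x), hx, addLeaf_adj_none,
      addLeaf_adj_none, ← hφ, φ.injective.eq_iff]
  refine ⟨⟨e, fun {x y} => ?_⟩, Option.some_injective _ ?_⟩
  · by_cases hx : φ (some x) = none
    · exact h_adj_of_none hx
    by_cases hy : φ (some y) = none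
    · rw [X'.adj_comm, X.adj_comm]
      exact h_adj_of_none hy
    · rw [← addLeaf_adj_some_some (w := w'), he_of_some hx, he_of_some hy, φ.map_adj_iff,
        addLeaf_adj_some_some]
  · exact (he_of_some (by simp [hφ])).trans hφ

/-- Attaching no paths changes nothing. -/
def attachPathsIsEmptyIso (X : SimpleGraph W) (w : W) (ι : Type*) [IsEmpty ι] (s : ℕ) :
    attachPaths X w ι s ≃g X where
  toEquiv := Equiv.sumEmpty _ _
  map_rel_iff' {a b} := by
    obtain x | p := a
    · obtain y | p := b
      · rfl
      · exact isEmptyElim p.1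
    · exact isEmptyElim p.1

/-- Splitting off one of the leaves attached to `w`. -/
def attachPathsOptionIso (X : SimpleGraph W) (w : W) (ι : Type*) :
    attachPaths X w (Option ι) 1 ≃g addLeaf (attachPaths X w ι 1) (.inl w) where
  toFun
    | .inl x => some (.inl x)
    | .inr (none, _) => none
    | .inr (some i, j) => some (.inr (i, j))
  invFun
    | some (.inl x) => .inl x
    | some (.inr (i, j)) => .inr (some i, j)
    | none => .inr (none, 0)
  left_inv := by
    rintro (x | ⟨_ | i, j⟩)
    · rfl
    · rw [Subsingleton.elim j 0]
    · rfl
  right_inv := by rintro (_ | x | p) <;> rfl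
  map_rel_iff' := by rintro (x | ⟨_ | i, j⟩) (y | ⟨_ | i', j'⟩) <;> simp [addLeaf]

theorem exists_iso_of_attachPaths_iso [Finite ι]
    (φ : attachPaths X w ι 1 ≃g attachPaths X' w' ι 1) (hφ : φ (.inl w) = .inl w') :
    ∃ e : X ≃g X', e w = w' := by
  induction ι using Finite.induction_empty_option with
  | of_equiv f ih =>
    obtain ⟨ψ, hψ⟩ := nonempty_attachPaths_iso 1 (Iso.refl (G := X)) (w := w) rfl f
    obtain ⟨ψ', hψ'⟩ := nonempty_attachPaths_iso 1 (Iso.refl (G := X')) (w := w') rfl f.symm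
    exact ih ((ψ.trans φ).trans ψ') ((congrArg (fun x => ψ' (φ x)) (hψ w)).trans
      ((congrArg ψ' hφ).trans (hψ' w')))
  | h_empty =>
    refine ⟨((attachPathsIsEmptyIso X w _ 1).symm.trans φ).trans
      (attachPathsIsEmptyIso X' w' _ 1), ?_⟩
    exact congrArg (attachPathsIsEmptyIso X' w' PEmpty 1) hφ
  | h_option ih =>
    obtain ⟨e, he⟩ := exists_iso_of_addLeaf_iso
      (((attachPathsOptionIso X w _).symm.trans φ).trans (attachPathsOptionIso X' w' _))
      (congrArg (attachPathsOptionIso X' w' _) hφ)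
    exact ih e he

end Leaves

section Counting

variable {n : ℕ} {S : Set (SimpleGraph (Fin n))}

theorem numIsoClasses_le_ncard {β : Type*} {B : Set β} (hB : B.Finite) {f : S → β}
    (h_mem : ∀ T, f T ∈ B) (h_iso : ∀ T T' : S, f T = f T' → Nonempty (T.1 ≃g T'.1)) :
    numIsoClasses S ≤ B.ncard := by
  have h_factors : Function.FactorsThrough (fun T : S => Quotient.mk (graphSetoid n) T.1) f :=
    fun T T' h_eq => Quotient.sound (h_iso T T' h_eq)
  rw [numIsoClasses, Set.image_eq_range,
    ← h_factors.extend_comp fun _ => Quotient.mk (graphSetoid n) ⊥, Set.range_comp]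
  have h_range : Set.range f ⊆ B := Set.range_subset_iff.2 h_mem
  exact (Set.ncard_image_le (hB.subset h_range)).trans (Set.ncard_le_ncard h_range hB)

theorem numIsoClasses_mono {S' : Set (SimpleGraph (Fin n))} (h : S ⊆ S') :
    numIsoClasses S ≤ numIsoClasses S' :=
  Set.ncard_le_ncard (Set.image_mono h) (Set.toFinite _)

theorem numIsoClasses_le_of_iso_attachPaths {M N a s : ℕ}
    (h : ∀ T ∈ S, ∃ (W : Type) (_ : Fintype W) (X : SimpleGraph W) (w : W), X.IsTree ∧
      Fintype.card W + N = M ∧ DominatesDegrees X w N ∧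
        Nonempty (T ≃g attachPaths X w (Fin a) s)) :
    numIsoClasses S ≤ numIsoClasses {T : SimpleGraph (Fin M) | T.IsTree} := by
  choose W _ X w h_tree h_card h_deg h_iso using h
  have h_card' : ∀ T hT, Fintype.card (W T hT ⊕ Fin N × Fin 1) = M := by simpa using h_card
  let padded (T : S) : SimpleGraph (Fin M) :=
    (attachPaths (X T T.2) (w T T.2) (Fin N) 1).overFin (h_card' T T.2)
  have padded_iso (T : S) : attachPaths (X T T.2) (w T T.2) (Fin N) 1 ≃g padded T := overFinIso _ _
  refine numIsoClasses_le_ncard (f := fun T => Quotient.mk _ (padded T)) (Set.toFinite _)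
    (fun T => ⟨padded T, (padded_iso T).isTree_iff.1 (isTree_attachPaths (h_tree T T.2)), rfl⟩)
    fun T T' h_eq => ?_
  obtain ⟨φ⟩ : Nonempty (padded T ≃g padded T') := Quotient.exact h_eq
  obtain ⟨e, he⟩ := exists_iso_of_attachPaths_iso (((padded_iso T).trans φ).trans
    (padded_iso T').symm) ((h_deg T T.2).iso_root (h_deg T' T'.2) _)
  obtain ⟨⟨i⟩, ⟨i'⟩⟩ := h_iso T T.2, h_iso T' T'.2
  obtain ⟨e', -⟩ := nonempty_attachPaths_iso s e he (Equiv.refl (Fin a))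
  exact ⟨(i.trans e').trans i'.symm⟩

end Counting

/-! ### A tree with few maximal independent sets -/

section UpperBound

variable {V V' : Type*} {G : SimpleGraph V} {G' : SimpleGraph V'} {k m : ℕ}

theorem dist_iso (e : G ≃g G') (x y : V) : G'.dist (e x) (e y) = G.dist x y := by
  rw [dist_eq_sInf, dist_eq_sInf]
  congr 1
  refine Set.Subset.antisymm ?_ ?_
  · rintro _ ⟨p, rfl⟩
    exact ⟨(p.map e.symm.toHom).copy (e.symm_apply_apply x) (e.symm_apply_apply y), by simp⟩
  · rintro _ ⟨p, rfl⟩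
    exact ⟨p.map e.toHom, by simp⟩

theorem dkIndep_image_iso (e : G ≃g G') {J : Set V} : DkIndep G' k (e '' J) ↔ DkIndep G k J := by
  simp only [DkIndep, Set.forall_mem_image, dist_iso, ne_eq, e.injective.eq_iff]

theorem mdi_congr (e : G ≃g G') (k : ℕ) : mdi G k = mdi G' k := by
  refine Nat.card_congr ((Equiv.Set.congr e.toEquiv).subtypeEquiv fun J =>
    and_congr (dkIndep_image_iso e).symm ?_)
  refine (Equiv.Set.congr e.toEquiv).forall_congr fun {J'} => ?_
  exact imp_congr (dkIndep_image_iso e).symm (imp_congr (Set.image_subset_image_iff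
    e.injective).symm e.injective.image_injective.eq_iff.symm)

theorem mdi_add_card_le [Fintype V] {L : Finset V} {e : V} (he : e ∉ L)
    (h_indep : DkIndep G k (insert e (L : Set V)))
    (h_close : ∀ x ∉ L, ∀ y ∉ L, G.dist x y ≤ k) : mdi G k + L.card ≤ Fintype.card V := by
  classical
  have h_exists : ∀ J, MaxDkIndep G k J → ∃ x ∉ L, x ∈ J := by
    intro J hJ
    by_contra! h
    have h_sub : J ⊆ L := fun x hx => by_contra fun hxL => h x hxL hx
    have h_eq := hJ.2 _ (dkIndep_mono h_indep (Set.insert_subset_insert h_sub))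
      (Set.subset_insert e J)
    exact he (h_sub (h_eq ▸ Set.mem_insert e J))
  have h_determined : ∀ J, MaxDkIndep G k J → ∀ x ∉ L, x ∈ J →
      J = insert x {l ∈ (L : Set V) | k + 1 ≤ G.dist x l} := by
    refine fun J hJ x hx hxJ => (hJ.2 _ (dkIndep_insert.2 ⟨?_, fun l hl _ => hl.2⟩) ?_).symm
    · exact dkIndep_mono h_indep fun l hl => .inr hl.1
    · intro y hy
      rcases eq_or_ne x y with rfl | hxy
      · exact .inl rfl
      have h_far := hJ.1 hxJ hy hxy
      exact .inr ⟨by_contra fun hyL => by have := h_close x hx y hyL; omega, h_far⟩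
  have : Nonempty V := ⟨e⟩
  choose! f hf using h_exists
  have h_le : mdi G k ≤ ((Lᶜ : Finset V) : Set V).ncard := by
    refine Set.ncard_le_ncard_of_injOn f (fun J hJ => by simpa using (hf J hJ).1)
      (fun J hJ J' hJ' h_eq => ?_)
    rw [h_determined J hJ _ (hf J hJ).1 (hf J hJ).2,
      h_determined J' hJ' _ (hf J' hJ').1 (hf J' hJ').2, h_eq]
  rw [Set.ncard_coe_finset, Finset.card_compl] at h_le
  have := Finset.card_le_univ L
  omega

variable {ι : Type*} {s : ℕ} {w : V}

theorem dist_attachPaths_root (hG : G.IsTree) (x : V ⊕ ι × Fin s) :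
    (attachPaths G w ι s).dist (.inl w) x = Sum.elim (G.dist w) (fun p => p.2 + 1) x :=
  (isParentFn_attachPaths (isParentFn_stepTo hG w)).dist_root x

theorem dist_attachPaths_of_ne (hG : G.IsTree) {x y : V ⊕ ι × Fin s}
    (hxy : Sum.elim (fun _ => none) (fun p => some p.1) x ≠
      Sum.elim (fun _ => none) (fun p => some p.1) y) :
    (attachPaths G w ι s).dist x y =
      (attachPaths G w ι s).dist (.inl w) x + (attachPaths G w ι s).dist (.inl w) y := by
  refine dist_eq_dist_add_dist_of_color_ne
    (isParentFn_attachPaths (isParentFn_stepTo hG w)).connected ?_ hxy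
  rintro (x | p) (y | p') h_adj hx hy
  · rfl
  · exact absurd (congrArg _ h_adj.1) hx
  · exact absurd (congrArg _ h_adj.1) hy
  · exact congrArg some h_adj.1

theorem mdi_attachPaths_add_card_le [Fintype V] [Fintype ι] (hG : G.IsTree) {e : V}
    (he : G.dist w e = m) (h_dist : ∀ x, G.dist w x ≤ m) :
    mdi (attachPaths G w ι (m + 1)) (2 * m) + Fintype.card ι ≤
      Fintype.card (V ⊕ ι × Fin (m + 1)) := by
  classical
  set Y := attachPaths G w ι (m + 1) with hY
  let legEnd (i : ι) : V ⊕ ι × Fin (m + 1) := .inr (i, Fin.last m)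
  have h_inj : legEnd.Injective := fun i j h => congrArg Prod.fst (Sum.inr_injective h)
  have h_dist_legEnd (i : ι) : Y.dist (.inl w) (legEnd i) = m + 1 := dist_attachPaths_root hG _
  rw [← Finset.card_univ, ← Finset.card_image_of_injective _ h_inj]
  refine mdi_add_card_le (e := .inl e) (by simp [legEnd]) (dkIndep_insert.2 ⟨?_, ?_⟩) ?_
  · simp only [Finset.coe_image, Finset.coe_univ, Set.image_univ]
    rintro _ ⟨i, rfl⟩ _ ⟨j, rfl⟩ h_ne
    rw [hY, dist_attachPaths_of_ne hG (x := legEnd i) (y := legEnd j) fun h =>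
      h_ne (congrArg legEnd (Option.some_injective _ h)), ← hY, h_dist_legEnd, h_dist_legEnd]
    omega
  · simp only [Finset.coe_image, Finset.coe_univ, Set.image_univ]
    rintro _ ⟨i, rfl⟩ -
    rw [hY, dist_attachPaths_of_ne hG (x := .inl e) (y := legEnd i) (Option.some_ne_none i).symm,
      ← hY, h_dist_legEnd, hY, dist_attachPaths_root hG, Sum.elim_inl, he]
    omega
  · have h_near : ∀ x ∉ Finset.univ.image legEnd, Y.dist (.inl w) x ≤ m := by
      rintro (x | ⟨i, j⟩) hx <;> rw [hY, dist_attachPaths_root hG]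
      · exact h_dist x
      · refine Fin.val_lt_last fun hj => hx ?_
        obtain rfl : j = Fin.last m := hj
        exact Finset.mem_image_of_mem legEnd (Finset.mem_univ i)
    intro x hx y hy
    have h_triangle := (isTree_attachPaths hG).connected.dist_triangle (G := Y) (u := x)
      (v := .inl w) (w := y)
    rw [Y.dist_comm (u := x) (v := .inl w)] at h_triangle
    have := h_near x hx
    have := h_near y hy
    omega

theorem exists_isTree_mdi_add_le {n : ℕ} (hm : 1 ≤ m) (hn : m + 1 ≤ n) :
    ∃ T : SimpleGraph (Fin n), T.IsTree ∧ mdi T (2 * m) + n / (m + 1) ≤ n + 1 := by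
  set q := n / (m + 1)
  set ρ := n % (m + 1)
  have h_div : (m + 1) * q + ρ = n := Nat.div_add_mod n (m + 1)
  have hq : 1 ≤ q := (Nat.one_le_div_iff m.succ_pos).2 hn
  have h_bot : (⊥ : SimpleGraph Unit).IsTree := .of_subsingleton
  have h_path := isTree_attachPaths (w := ()) (ι := Unit) (s := m) h_bot
  set X := attachPaths (attachPaths (⊥ : SimpleGraph Unit) () Unit m) (.inl ()) (Fin ρ) 1
  have hX : X.IsTree := isTree_attachPaths h_path
  have h_end : X.dist (.inl (.inl ())) (.inl (.inr ((), ⟨m - 1, by omega⟩))) = m := by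
    rw [dist_attachPaths_root h_path, Sum.elim_inl, dist_attachPaths_root h_bot]
    exact Nat.sub_add_cancel hm
  have h_dist : ∀ x, X.dist (.inl (.inl ())) x ≤ m := by
    rintro ((x | ⟨i, j⟩) | p) <;> rw [dist_attachPaths_root h_path]
    · rw [Sum.elim_inl, dist_attachPaths_root h_bot]
      simp
    · rw [Sum.elim_inl, dist_attachPaths_root h_bot]
      exact j.2
    · simpa using hm
  have h_card : Fintype.card (((Unit ⊕ Unit × Fin m) ⊕ Fin ρ × Fin 1) ⊕
      Fin (q - 1) × Fin (m + 1)) = n := by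
    obtain ⟨p, hp⟩ := Nat.exists_eq_add_of_le' hq
    simp [← h_div, hp]
    ring
  have h_mdi := mdi_attachPaths_add_card_le (ι := Fin (q - 1)) hX h_end h_dist
  rw [h_card, Fintype.card_fin] at h_mdi
  let i := overFinIso (attachPaths X (.inl (.inl ())) (Fin (q - 1)) (m + 1)) h_card
  refine ⟨_, i.isTree_iff.1 (isTree_attachPaths hX), ?_⟩
  rw [← mdi_congr i]
  omega

end UpperBound

/-! ### Trees with at most `k ^ 2` vertices, and the case `4 ≤ k` -/

section Padding

variable {V : Type*} {G : SimpleGraph V} {m : ℕ} {w : V} {R : Finset V}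

theorem one_le_ncard_neighborSet [Finite V] [Nontrivial V] (hG : G.Connected) (w : V) :
    1 ≤ (G.neighborSet w).ncard := by
  obtain ⟨x, hx⟩ := exists_ne w
  exact (Set.ncard_pos (Set.toFinite _)).2 ⟨stepTo G w x, (stepTo_spec hG hx.symm).1⟩

theorem numIsoClasses_le_of_le {n M : ℕ} (hn : 2 ≤ n) (h_le : n ≤ M)
    {S : Set (SimpleGraph (Fin n))} (hS : ∀ T ∈ S, T.IsTree) :
    numIsoClasses S ≤ numIsoClasses {T : SimpleGraph (Fin M) | T.IsTree} := by
  obtain rfl | h_lt := h_le.eq_or_lt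
  · exact numIsoClasses_mono hS
  have : Nontrivial (Fin n) := Fin.nontrivial_iff_two_le.2 hn
  refine numIsoClasses_le_of_iso_attachPaths (N := M - n) (a := 0) (s := 0) fun T hT => ?_
  obtain ⟨w, hw⟩ := Finite.exists_max fun v => (T.neighborSet v).ncard
  have h_pos := one_le_ncard_neighborSet (hS T hT).connected w
  refine ⟨Fin n, inferInstance, T, w, hS T hT, by rw [Fintype.card_fin]; omega, ⟨fun u _ => ?_, ?_⟩,
    ⟨(attachPathsIsEmptyIso T w (Fin 0) 0).symm⟩⟩
  · have := hw u
    omega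
  · omega

theorem exists_forall_dist_le_of_mdi_le [Fintype V] (hG : G.IsTree) (hm : 1 ≤ m)
    (h_card : m + 1 ≤ Fintype.card V)
    (h_mdi : mdi G (2 * m) + Fintype.card V / (m + 1) ≤ Fintype.card V + 1) :
    ∃ w, ∀ y, G.dist w y ≤ m + 1 := by
  refine exists_forall_dist_le hG fun a b => ?_
  obtain ⟨R, hR⟩ := exists_isRigidPacking hG h_card h_mdi a
  exact dist_le_of_isRigidPacking hG.connected hm hR b

theorem ncard_neighborSet_induce_le [Finite V] (A : Set V) (u : A) :
    ((G.induce A).neighborSet u).ncard ≤ (G.neighborSet u).ncard := by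
  rw [← Set.ncard_image_of_injective _ Subtype.val_injective]
  refine Set.ncard_le_ncard ?_ (Set.toFinite _)
  rintro _ ⟨x, hx, rfl⟩
  exact hx

variable [Fintype V]

theorem exists_isRigidPacking_and_isRadialPacking (hG : G.IsTree) (hm : 1 ≤ m)
    (h_card : 2 * (m + 1) ≤ Fintype.card V)
    (h_mdi : mdi G (2 * m) + Fintype.card V / (m + 1) ≤ Fintype.card V + 1)
    (hw : ∀ y, G.dist w y ≤ m + 1) :
    ∃ R, IsRigidPacking G m (Fintype.card V / (m + 1)) w R ∧ IsRadialPacking G m w R := by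
  obtain ⟨R, hR⟩ := exists_isRigidPacking hG (by omega) h_mdi w
  exact ⟨R, hR, hm, hw, hR.indep,
    hR.card_eq ▸ (Nat.le_div_iff_mul_le m.succ_pos).2 h_card⟩

theorem ncard_neighborSet_le_card_branch (hG : G.IsTree) {u : V} (hu : u ≠ w) :
    (G.neighborSet u).ncard ≤ (branch G w u).card := by
  classical
  have h_mem : u ∈ branch G w u := mem_branch.2 ⟨hu, rfl⟩
  have h_sub : G.neighborSet u ⊆ (insert w ((branch G w u).erase u) : Finset V) := by
    intro x hx
    rw [Finset.mem_coe, Finset.mem_insert, Finset.mem_erase, mem_branch]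
    exact or_iff_not_imp_left.2 fun hxw =>
      ⟨hx.ne', hxw, (stepTo_eq_of_adj hG hx hu hxw).symm⟩
  have h_le := Set.ncard_le_ncard h_sub (Set.toFinite _)
  rw [Set.ncard_coe_finset] at h_le
  calc (G.neighborSet u).ncard ≤ ((branch G w u).erase u).card + 1 :=
        h_le.trans (Finset.card_insert_le _ _)
    _ = (branch G w u).card := Finset.card_erase_add_one h_mem

theorem isTree_core (hG : G.IsTree) (C : Finset V) : (G.induce (core G w C)).IsTree :=
  ((isParentFn_stepTo hG w).induce (root_mem_core G w C) fun _ hx => stepTo_mem_core hG hx).isTree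

namespace IsRadialPacking

theorem exists_core_iso (hR : IsRadialPacking G m w R) (hG : G.IsTree) {ρ : ℕ}
    (h_card : Fintype.card V = R.card * (m + 1) + ρ) (hρ : ρ + 1 ≤ R.card) :
    ∃ C : Finset V, Nat.card (core G w C) = (ρ + 1) * (m + 1) + ρ ∧
      Nonempty (G ≃g attachPaths (G.induce (core G w C)) ⟨w, root_mem_core G w C⟩
        (Fin (R.card - (ρ + 1))) (m + 1)) := by
  classical
  have h_legs := hR.card_le_card_filter_isLegEnd hG h_card
  obtain ⟨C, h_sub, hC⟩ := Finset.exists_subset_card_eq (Nat.sub_le_iff_le_add.2 h_legs)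
  obtain ⟨i⟩ := nonempty_iso_attachPaths_core hG (fun l hl => (Finset.mem_filter.1 (h_sub hl)).2)
    ((hR.injOn_stepTo hG.connected).mono fun l hl => Finset.filter_subset _ _ (h_sub hl))
  obtain ⟨j, -⟩ := nonempty_attachPaths_iso (m + 1) (Iso.refl (G := G.induce (core G w C)))
    (w := ⟨w, root_mem_core G w C⟩) rfl (C.equivFinOfCardEq hC)
  refine ⟨C, ?_, ⟨i.trans j⟩⟩
  have h_sum := Nat.card_congr (i.trans j).toEquiv
  rw [Nat.card_sum, Nat.card_prod, Nat.card_fin, Nat.card_fin, Nat.card_eq_fintype_card,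
    h_card] at h_sum
  have h_split : R.card * (m + 1) = (R.card - (ρ + 1)) * (m + 1) + (ρ + 1) * (m + 1) := by
    rw [← Nat.add_mul, Nat.sub_add_cancel hρ]
  omega

theorem dominatesDegrees_core (hR : IsRadialPacking G m w R) (hG : G.IsTree) {ρ N : ℕ}
    (h_card : Fintype.card V = R.card * (m + 1) + ρ) {C : Finset V} [Nontrivial (core G w C)]
    (hN : m + 1 + ρ ≤ N) :
    DominatesDegrees (G.induce (core G w C)) ⟨w, root_mem_core G w C⟩ N := by
  have h_pos := one_le_ncard_neighborSet (isTree_core hG C).connected ⟨w, root_mem_core G w C⟩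
  have := hR.pos
  refine ⟨fun u hu => ?_, by omega⟩
  have h_branch := ncard_neighborSet_le_card_branch hG fun h : u.1 = w => hu (Subtype.ext h)
  have := ncard_neighborSet_induce_le (G := G) _ u
  have := hR.card_branch_le hG h_card u
  omega

end IsRadialPacking

end Padding

theorem numIsoClasses_le_of_mdi_le_of_two_le {m n : ℕ} (hm : 2 ≤ m) (hn : (2 * m) ^ 2 < n)
    {S : Set (SimpleGraph (Fin n))}
    (hS : ∀ T ∈ S, T.IsTree ∧ mdi T (2 * m) + n / (m + 1) ≤ n + 1) :
    numIsoClasses S ≤ numIsoClasses {T : SimpleGraph (Fin ((2 * m) ^ 2)) | T.IsTree} := by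
  set q := n / (m + 1)
  set ρ := n % (m + 1)
  have h_div : q * (m + 1) + ρ = n := Nat.div_add_mod' n (m + 1)
  have hρ : ρ ≤ m := Nat.lt_succ_iff.1 (Nat.mod_lt n m.succ_pos)
  have hmq : m + 1 ≤ q := (Nat.le_div_iff_mul_le m.succ_pos).2 (by nlinarith)
  have h_core_lt : (ρ + 1) * (m + 1) + ρ + (2 * m + 1) ≤ (2 * m) ^ 2 := by nlinarith
  refine numIsoClasses_le_of_iso_attachPaths (N := (2 * m) ^ 2 - ((ρ + 1) * (m + 1) + ρ))
    (a := q - (ρ + 1)) (s := m + 1) fun T hT => ?_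
  obtain ⟨hT, h_mdi⟩ := hS T hT
  have h_card : 2 * (m + 1) ≤ Fintype.card (Fin n) := by
    rw [Fintype.card_fin]
    nlinarith
  replace h_mdi : mdi T (2 * m) + Fintype.card (Fin n) / (m + 1) ≤ Fintype.card (Fin n) + 1 := by
    rwa [Fintype.card_fin]
  obtain ⟨w, hw⟩ := exists_forall_dist_le_of_mdi_le hT (by omega) (by omega) h_mdi
  obtain ⟨R, h_rigid, hR⟩ :=
    exists_isRigidPacking_and_isRadialPacking hT (by omega) h_card h_mdi hw
  have h_cardR : R.card = q := by rw [h_rigid.card_eq, Fintype.card_fin]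
  have h_cardV : Fintype.card (Fin n) = R.card * (m + 1) + ρ := by
    rw [Fintype.card_fin, h_cardR, h_div]
  obtain ⟨C, hC, ⟨i⟩⟩ := hR.exists_core_iso hT h_cardV (by omega)
  rw [h_cardR] at i
  have : Nontrivial (core T w C) := Finite.one_lt_card_iff_nontrivial.1 (by nlinarith)
  classical
  rw [Nat.card_eq_fintype_card] at hC
  exact ⟨core T w C, inferInstance, _, _, isTree_core hT C, by omega,
    hR.dominatesDegrees_core hT h_cardV (by omega), ⟨i⟩⟩

/-! ### The case `k = 2` -/

section Two

variable {V : Type*} {G : SimpleGraph V} {m q : ℕ} {w : V} {R : Finset V}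

theorem IsRigidPacking.dist_le_of_dist_eq (h_rigid : IsRigidPacking G m q w R) (hG : G.IsTree)
    (hR : IsRadialPacking G m w R) {x y : V} (hx : x ∉ R) (hy : y ∉ R)
    (h_deep : G.dist w y = m + 1) : G.dist x y ≤ 2 * m := by
  by_contra! h_far
  rw [G.dist_comm (u := x)] at h_far
  obtain ⟨v, hv, h_vx, h_depth⟩ := h_rigid.exists_dominating x
  have h_vy : G.dist v y ≤ 2 * m := by
    by_contra! h_vy
    rw [G.dist_comm (u := v)] at h_vy
    have := h_rigid.lt_dist y hy (fun z _ => h_deep ▸ hR.dist_le z) v x h_vy h_far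
      (fun h => hx (h ▸ hv))
    omega
  by_cases h_v : G.dist w v = m + 1
  · have := dist_le_of_dist_le_of_dist_root_le hG h_vy h_vx (by omega) h_depth
    omega
  · obtain ⟨u, hu, h_uy, h_depth'⟩ := h_rigid.exists_dominating y
    have := hR.dist_le u
    have h_step_u : stepTo G w u = stepTo G w y := by
      by_contra h_ne
      have := dist_eq_of_stepTo_ne hG h_ne
      omega
    have h_step_v : stepTo G w v = stepTo G w y := by
      by_contra h_ne
      have := dist_eq_of_stepTo_ne hG h_ne
      have := (hR.ne_and_le_dist hG.connected hv).2
      omega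
    obtain rfl := hR.injOn_stepTo hG.connected hv hu (h_step_v.trans h_step_u.symm)
    omega

theorem ncard_neighborSet_add_le [Fintype V] (hG : G.IsTree) {c : V} (h : G.Adj w c) :
    (G.neighborSet c).ncard + (G.neighborSet w).ncard ≤ Fintype.card V := by
  have h_disjoint : Disjoint (G.neighborSet c) (G.neighborSet w) := by
    refine Set.disjoint_left.2 fun x hcx hwx => hG.dist_ne_of_adj x h ?_
    rw [dist_eq_one_iff_adj.2 hcx.symm, dist_eq_one_iff_adj.2 hwx.symm]
  rw [← Set.ncard_union_eq h_disjoint (Set.toFinite _) (Set.toFinite _), ← Nat.card_eq_fintype_card]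
  exact Set.ncard_le_card _

theorem dist_eq_one_or_eq_two (hR : IsRadialPacking G 1 w R) (hG : G.Connected) {x : V}
    (hx : x ≠ w) : G.dist w x = 1 ∨ G.dist w x = 2 := by
  have := hG.pos_dist_of_ne hx.symm
  have := hR.dist_le x
  omega

theorem stepTo_eq_of_dist_eq_two (h_rigid : IsRigidPacking G 1 q w R) (hG : G.IsTree)
    (hR : IsRadialPacking G 1 w R) {y z : V} (hy : y ∉ R) (h_wy : G.dist w y = 2)
    (h_wz : G.dist w z = 2) : stepTo G w z = stepTo G w y := by
  by_contra h_ne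
  have h_wz_ne : w ≠ z := by rintro rfl; simp at h_wz
  have h_wc : G.dist w (stepTo G w z) = 1 :=
    dist_eq_one_iff_adj.2 (stepTo_spec hG.connected h_wz_ne).1
  by_cases hc : stepTo G w z ∈ R
  · obtain ⟨v, hv, h_vz, h_depth⟩ := h_rigid.exists_dominating z
    have h_step : stepTo G w v = stepTo G w z := by
      by_contra h_step
      have := dist_eq_of_stepTo_ne hG h_step
      omega
    rw [hR.injOn_stepTo hG.connected hv hc (h_step.trans (stepTo_stepTo hG w z).symm)] at h_depth
    omega
  · have := h_rigid.dist_le_of_dist_eq hG hR hc hy h_wy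
    have := dist_eq_of_stepTo_ne hG ((stepTo_stepTo hG w z).trans_ne h_ne)
    omega

theorem IsRadialPacking.card_le_two (hR : IsRadialPacking G 1 w R) (hG : G.IsTree) {y : V}
    (h_step : ∀ z, G.dist w z = 2 → stepTo G w z = stepTo G w y) : R.card ≤ 2 := by
  have h_shallow := hR.card_filter_dist_le hG.connected subset_rfl
  have h_deep : (R.filter fun v => ¬ G.dist w v ≤ 1).card ≤ 1 := by
    refine Finset.card_le_one.2 fun u hu v hv => ?_
    rw [Finset.mem_filter] at hu hv
    have := hR.dist_le u
    have := hR.dist_le v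
    exact hR.injOn_stepTo hG.connected hu.1 hv.1
      ((h_step u (by omega)).trans (h_step v (by omega)).symm)
  have := R.card_filter_add_card_filter_not (G.dist w · ≤ 1)
  omega

theorem three_le_ncard_neighborSet_stepTo [Finite V] (h_rigid : IsRigidPacking G 1 q w R)
    (hG : G.IsTree) (hR : IsRadialPacking G 1 w R) {y : V} (hy : y ∉ R) (h_wy : G.dist w y = 2)
    (h_step : ∀ z, G.dist w z = 2 → stepTo G w z = stepTo G w y) :
    3 ≤ (G.neighborSet (stepTo G w y)).ncard := by
  classical
  obtain ⟨l, hl, h_ly, h_depth⟩ := h_rigid.exists_dominating y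
  have h_wl : G.dist w l = 2 := by
    have := hR.dist_le l
    omega
  have h_adj : ∀ {z}, G.dist w z = 2 → G.Adj (stepTo G w y) z := by
    intro z h_wz
    have h_ne : w ≠ z := by rintro rfl; simp at h_wz
    have h_dist := (stepTo_spec hG.connected h_ne).2
    rw [h_step z h_wz, h_wz] at h_dist
    exact dist_eq_one_iff_adj.1 (Nat.add_right_cancel h_dist)
  have h_wy_ne : w ≠ y := by rintro rfl; simp at h_wy
  have h_wl_ne : w ≠ l := by rintro rfl; simp at h_wl
  have h_sub : (({w, y, l} : Finset V) : Set V) ⊆ G.neighborSet (stepTo G w y) := by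
    simp only [Finset.coe_insert, Finset.coe_singleton, Set.insert_subset_iff,
      Set.singleton_subset_iff]
    exact ⟨(stepTo_spec hG.connected h_wy_ne).1.symm, h_adj h_wy, h_adj h_wl⟩
  have h_le := Set.ncard_le_ncard h_sub (Set.toFinite _)
  rwa [Set.ncard_coe_finset,
    Finset.card_eq_three.2 ⟨w, y, l, h_wy_ne, h_wl_ne, fun h => hy (h ▸ hl), rfl⟩] at h_le

theorem mem_of_dist_eq_two [Fintype V] (h_rigid : IsRigidPacking G 1 q w R) (hG : G.IsTree)
    (hR : IsRadialPacking G 1 w R) (h_card : Fintype.card V ≤ 2 * R.card + 1)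
    (h_max : ∀ c, (∀ y, G.dist c y ≤ 2) → (G.neighborSet c).ncard ≤ (G.neighborSet w).ncard)
    {y : V} (h_wy : G.dist w y = 2) : y ∈ R := by
  by_contra hy
  have h_step : ∀ z, G.dist w z = 2 → stepTo G w z = stepTo G w y := fun z =>
    stepTo_eq_of_dist_eq_two h_rigid hG hR hy h_wy
  have h_wy_ne : w ≠ y := by rintro rfl; simp at h_wy
  have h_adj := (stepTo_spec hG.connected h_wy_ne).1
  have h_center : ∀ z, G.dist (stepTo G w y) z ≤ 2 := by
    intro z
    by_cases h_wz : G.dist w z = 2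
    · have h_wz_ne : w ≠ z := by rintro rfl; simp at h_wz
      have := (stepTo_spec hG.connected h_wz_ne).2
      rw [h_step z h_wz] at this
      omega
    · have h_triangle := hG.connected.dist_triangle (u := stepTo G w y) (v := w) (w := z)
      rw [dist_eq_one_iff_adj.2 h_adj.symm] at h_triangle
      have := hR.dist_le z
      omega
  have h_three := three_le_ncard_neighborSet_stepTo h_rigid hG hR hy h_wy h_step
  have := h_max _ h_center
  have := ncard_neighborSet_add_le hG h_adj
  have := hR.card_le_two hG h_step
  omega

/-- The star with `r` leaves together with `a` paths of length two attached at its centre. -/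
def shortLegSpider (r a : ℕ) : SimpleGraph (Option (Fin r) ⊕ Fin a × Fin 2) :=
  attachPaths (starGraph none) none (Fin a) 2

theorem exists_starGraph_iso [Finite V] (hG : G.IsTree) (h : ∀ x ≠ w, G.Adj w x) :
    ∃ r, ∃ e : G ≃g starGraph (none : Option (Fin r)), e w = none := by
  classical
  let e : V ≃ Option (Fin _) :=
    (Equiv.optionSubtypeNe w).symm.trans (Equiv.optionCongr (Finite.equivFin {x // x ≠ w}))
  have h_root : e w = none := by simp [e]
  have h_iff : ∀ x, e x = none ↔ x = w := fun x => h_root ▸ e.injective.eq_iff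
  refine ⟨_, ⟨e, ?_⟩, h_root⟩
  intro x y
  rw [starGraph_adj, e.injective.ne_iff, h_iff, h_iff]
  refine ⟨?_, fun hxy => ⟨hxy.ne, ?_⟩⟩
  · rintro ⟨h_ne, rfl | rfl⟩
    · exact h y h_ne.symm
    · exact (h x h_ne).symm
  · by_contra! h_ne
    refine hG.dist_ne_of_adj w hxy ?_
    rw [dist_eq_one_iff_adj.2 (h x h_ne.1), dist_eq_one_iff_adj.2 (h y h_ne.2)]

theorem isLegEnd_two [Fintype V] (hG : G.IsTree) (hR : IsRadialPacking G 1 w R)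
    (h_mem : ∀ y, G.dist w y = 2 → y ∈ R) {l : V} (h_wl : G.dist w l = 2) : IsLegEnd G w 2 l := by
  classical
  have h_sub : branch G w l ⊆ {stepTo G w l, l} := by
    intro x hx
    obtain ⟨h_ne, h_step⟩ := mem_branch.1 hx
    rw [Finset.mem_insert, Finset.mem_singleton]
    rcases dist_eq_one_or_eq_two hR hG.connected h_ne with h_wx | h_wx
    · exact .inl ((stepTo_of_adj hG (dist_eq_one_iff_adj.1 h_wx)).symm.trans h_step)
    · exact .inr (hR.injOn_stepTo hG.connected (h_mem x h_wx) (h_mem l h_wl) h_step)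
  exact ⟨h_wl, (Finset.card_le_card h_sub).trans Finset.card_le_two⟩

theorem exists_iso_shortLegSpider [Finite V] (hG : G.IsTree) (hR : IsRadialPacking G 1 w R)
    (h_mem : ∀ y, G.dist w y = 2 → y ∈ R) :
    ∃ a ∈ ({R.card - 1, R.card} : Set ℕ), ∃ r, Nonempty (G ≃g shortLegSpider r a) := by
  classical
  have := Fintype.ofFinite V
  let L := R.filter fun v => ¬ G.dist w v ≤ 1
  have hL : ∀ {v}, v ∈ L ↔ G.dist w v = 2 := by
    intro v
    rw [Finset.mem_filter]
    have := hR.dist_le v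
    exact ⟨fun h => by omega, fun h => ⟨h_mem v h, by omega⟩⟩
  obtain ⟨i⟩ := nonempty_iso_attachPaths_core (C := L) hG
    (fun l hl => isLegEnd_two hG hR h_mem (hL.1 hl))
    ((hR.injOn_stepTo hG.connected).mono (Finset.coe_subset.2 (Finset.filter_subset _ _)))
  have h_star : ∀ x : core G w L, x ≠ ⟨w, root_mem_core G w L⟩ →
      (G.induce (core G w L)).Adj ⟨w, root_mem_core G w L⟩ x := by
    rintro ⟨x, hx⟩ h_ne
    replace h_ne : x ≠ w := fun h => h_ne (Subtype.ext h)
    rcases dist_eq_one_or_eq_two hR hG.connected h_ne with h_wx | h_wx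
    · exact (dist_eq_one_iff_adj.1 h_wx : G.Adj w x)
    · exact absurd (mem_branch.2 ⟨h_ne, rfl⟩) (hx x (hL.2 h_wx))
  obtain ⟨r, e, he⟩ := exists_starGraph_iso (isTree_core hG L) h_star
  obtain ⟨j, -⟩ := nonempty_attachPaths_iso 2 e he L.equivFin
  refine ⟨L.card, ?_, r, ⟨i.trans j⟩⟩
  have h_split : _ + L.card = R.card := R.card_filter_add_card_filter_not (G.dist w · ≤ 1)
  have := hR.card_filter_dist_le hG.connected subset_rfl
  rw [Set.mem_insert_iff, Set.mem_singleton_iff]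
  omega

theorem exists_iso_shortLegSpider_of_mdi_le [Fintype V] (hG : G.IsTree)
    (h_card : 4 ≤ Fintype.card V)
    (h_mdi : mdi G 2 + Fintype.card V / 2 ≤ Fintype.card V + 1) :
    ∃ a ∈ ({Fintype.card V / 2 - 1, Fintype.card V / 2} : Set ℕ), ∃ r,
      Nonempty (G ≃g shortLegSpider r a) := by
  obtain ⟨w₀, hw₀⟩ := exists_forall_dist_le_of_mdi_le (m := 1) hG le_rfl (by omega) h_mdi
  obtain ⟨w, hw, h_max⟩ := Set.exists_max_image {w | ∀ y, G.dist w y ≤ 2}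
    (fun c => (G.neighborSet c).ncard) (Set.toFinite _) ⟨w₀, hw₀⟩
  obtain ⟨R, h_rigid, hR⟩ :=
    exists_isRigidPacking_and_isRadialPacking (m := 1) hG le_rfl h_card h_mdi hw
  have h_cardR : R.card = Fintype.card V / 2 := h_rigid.card_eq
  rw [← h_cardR]
  exact exists_iso_shortLegSpider hG hR fun y =>
    mem_of_dist_eq_two h_rigid hG hR (by omega) h_max

end Two

theorem isTree_pathGraph (n : ℕ) : (pathGraph (n + 1)).IsTree := by
  have h_parent : IsParentFn (pathGraph (n + 1)) 0 (fun x => ⟨x - 1, by omega⟩) Fin.val := by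
    refine ⟨fun x y => ?_, rfl, fun x hx => ?_⟩
    · rw [pathGraph_adj, ← Fin.val_ne_zero_iff, ← Fin.val_ne_zero_iff, Fin.ext_iff, Fin.ext_iff]
      dsimp only
      omega
    · exact Nat.sub_add_cancel (Nat.pos_of_ne_zero (Fin.val_ne_zero_iff.2 hx))
  exact h_parent.isTree

theorem two_le_numIsoClasses_isTree : 2 ≤ numIsoClasses {T : SimpleGraph (Fin 4) | T.IsTree} := by
  refine (Set.one_lt_ncard (Set.toFinite _)).2 ⟨_, ⟨starGraph 0, isTree_starGraph 0, rfl⟩,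
    _, ⟨pathGraph 4, isTree_pathGraph 3, rfl⟩, fun h_eq => ?_⟩
  obtain ⟨e⟩ : Nonempty (starGraph (0 : Fin 4) ≃g pathGraph 4) := Quotient.exact h_eq
  have h_universal : ∀ v ≠ e 0, (pathGraph 4).Adj (e 0) v := by
    intro v hv
    rw [← e.apply_symm_apply v, e.map_adj_iff, starGraph_adj_center_iff]
    rintro h
    exact hv (by simp [h])
  have h_path : ∀ u : Fin 4, ∃ v ≠ u, ¬ (pathGraph 4).Adj u v := by
    simp only [pathGraph_adj]
    decide
  obtain ⟨v, hv, h_not_adj⟩ := h_path (e 0)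
  exact h_not_adj (h_universal v hv)

theorem numIsoClasses_le_of_mdi_two_le {n : ℕ} (hn : 4 ≤ n) {S : Set (SimpleGraph (Fin n))}
    (hS : ∀ T ∈ S, T.IsTree ∧ mdi T 2 + n / 2 ≤ n + 1) :
    numIsoClasses S ≤ numIsoClasses {T : SimpleGraph (Fin 4) | T.IsTree} := by
  have h_exists : ∀ T : S, ∃ a ∈ ({n / 2 - 1, n / 2} : Set ℕ), ∃ r,
      Nonempty (T.1 ≃g shortLegSpider r a) := by
    intro T
    obtain ⟨hT, h_mdi⟩ := hS T T.2
    simpa only [Fintype.card_fin] using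
      exists_iso_shortLegSpider_of_mdi_le hT (by simpa using hn) (by simpa using h_mdi)
  choose a ha r i using h_exists
  have h_card : ∀ T, n = r T + 1 + a T * 2 := fun T => by
    simpa using Nat.card_congr (i T).some.toEquiv
  calc numIsoClasses S ≤ ({n / 2 - 1, n / 2} : Set ℕ).ncard := by
        refine numIsoClasses_le_ncard (Set.toFinite _) ha fun T T' h_a => ?_
        have h_r : r T = r T' := by
          have := h_card T
          have := h_card T'
          omega
        obtain ⟨⟨i⟩, ⟨i'⟩⟩ := i T, i T'
        rw [h_r, h_a] at i
        exact ⟨i.trans i'.symm⟩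
    _ ≤ 2 := (Set.ncard_insert_le _ _).trans (by rw [Set.ncard_singleton])
    _ ≤ _ := two_le_numIsoClasses_isTree

end MinimalTrees

/-- For all `n ≥ 2` and even `k ≥ 2`, the number of isomorphism classes
of `k`-minimal trees on `n` vertices is at most `t(k²)`, the number of isomorphism
classes of trees on `k²` vertices. -/
theorem stmt_19 (n : ℕ) (hn : 2 ≤ n) (k : ℕ) (hk : 2 ≤ k) (hke : Even k) :
    numIsoClasses {T : SimpleGraph (Fin n) | T.IsTree ∧
        ∀ T' : SimpleGraph (Fin n), T'.IsTree → mdi T k ≤ mdi T' k} ≤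
      numIsoClasses {T : SimpleGraph (Fin (k ^ 2)) | T.IsTree} := by
  obtain h_small | h_large := le_or_gt n (k ^ 2)
  · exact MinimalTrees.numIsoClasses_le_of_le hn h_small fun T hT => hT.1
  obtain ⟨m, rfl⟩ := even_iff_exists_two_mul.1 hke
  obtain ⟨T₀, hT₀, h_mdi₀⟩ := MinimalTrees.exists_isTree_mdi_add_le (m := m) (n := n)
    (by omega) (by nlinarith)
  have h_minimal : ∀ T ∈ {T : SimpleGraph (Fin n) | T.IsTree ∧
      ∀ T' : SimpleGraph (Fin n), T'.IsTree → mdi T (2 * m) ≤ mdi T' (2 * m)},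
      T.IsTree ∧ mdi T (2 * m) + n / (m + 1) ≤ n + 1 := fun T hT =>
    ⟨hT.1, (Nat.add_le_add_right (hT.2 T₀ hT₀) _).trans h_mdi₀⟩
  obtain rfl | hm : m = 1 ∨ 2 ≤ m := by omega
  · exact MinimalTrees.numIsoClasses_le_of_mdi_two_le h_large.le h_minimal
  · exact MinimalTrees.numIsoClasses_le_of_mdi_le_of_two_le hm h_large h_minimal
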